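/- arXiv:1401.2707 — 2 statements merged into one kernel-verified Lean document; each statement's English description precedes it below -/
import Mathlib

section
/- Let n range over even positive integers and for each such n let k(n) be a divisor of n with 3 ≤ k(n) ≤ K₀(n) − (log n)²/n. Then the proportion of 3-regular simple graphs on the vertex set {1,…,n} that contain a k(n)-cycle factor tends to 0 as n → ∞. -/
/-- `K₀(n) = log₂(2n/e) / (1 − (1/2)·log₂ 3)`. -/
noncomputable def K0 (n : ℕ) : ℝ :=
  Real.logb 2 (2 * n / Real.exp 1) / (1 - Real.logb 2 3 / 2)

/-- A graph is 3-regular (cubic) if every vertex has degree exactly 3. -/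
def IsCubic {V : Type*} (G : SimpleGraph V) : Prop :=
  ∀ v, (G.neighborSet v).ncard = 3

/-- `G` contains a `k`-cycle factor: a collection of `n/k` vertex-disjoint cycles of
length `k` covering all the vertices.  The factor is encoded by a map giving, for each
of the `n/k` cycles, the cyclic sequence of its `k` vertices. -/
def HasCycleFactor {n : ℕ} (G : SimpleGraph (Fin n)) (k : ℕ) : Prop :=
  ∃ f : Fin (n / k) → Fin k → Fin n,
    Function.Bijective (fun p : Fin (n / k) × Fin k => f p.1 p.2) ∧
    ∀ (c : Fin (n / k)) (i : Fin k),
      G.Adj (f c i) (f c ⟨((i : ℕ) + 1) % k, Nat.mod_lt _ i.pos⟩)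


namespace CF
open Finset
set_option linter.unusedSectionVars false
open scoped symmDiff
variable {V : Type*} [Fintype V]

/-- degree of a vertex -/
noncomputable def dg (G : SimpleGraph V) (v : V) : ℕ := (G.neighborSet v).ncard

/-- toggle the edge `xy` -/
def tg (G : SimpleGraph V) (x y : V) : SimpleGraph V := G ∆ SimpleGraph.edge x y

theorem tg_adj (G : SimpleGraph V) {x y : V} (h : x ≠ y) (s t : V) :
    (tg G x y).Adj s t ↔
      (((s = x ∧ t = y) ∨ (s = y ∧ t = x)) ∧ ¬ G.Adj s t) ∨
      (¬ ((s = x ∧ t = y) ∨ (s = y ∧ t = x)) ∧ G.Adj s t) := by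
  have : (tg G x y).Adj s t ↔ (G.Adj s t ∧ ¬ (SimpleGraph.edge x y).Adj s t) ∨
      ((SimpleGraph.edge x y).Adj s t ∧ ¬ G.Adj s t) := by
    simp [tg, symmDiff]
  rw [this, SimpleGraph.edge_adj]
  grind

theorem tg_tg (G : SimpleGraph V) (x y : V) : tg (tg G x y) x y = G := by
  simp [tg]

theorem tg_inj {G H : SimpleGraph V} {x y : V} (h : tg G x y = tg H x y) : G = H := by
  rw [← tg_tg G x y, h, tg_tg]

theorem dg_eq_zero {G : SimpleGraph V} {v : V} (h : dg G v = 0) (w : V) : ¬ G.Adj v w := by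
  intro hw
  have := (Set.ncard_eq_zero (Set.toFinite (G.neighborSet v))).1 h
  have h2 : w ∈ G.neighborSet v := hw
  simp [this] at h2

theorem tg_dg_add (G : SimpleGraph V) {x y : V} (h : x ≠ y) (hn : ¬ G.Adj x y) (v : V) [Decidable (v = x)] [Decidable (v = y)] :
    dg (tg G x y) v = dg G v + (if v = x then 1 else 0) + (if v = y then 1 else 0) := by
  have hn' : ¬ G.Adj y x := fun h => hn h.symm
  unfold dg
  by_cases hx : v = x
  · subst hx
    have : (tg G v y).neighborSet v = insert y (G.neighborSet v) := by
      ext t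
      simp only [SimpleGraph.mem_neighborSet, tg_adj _ h, Set.mem_insert_iff]
      grind
    rw [this, Set.ncard_insert_of_notMem (by simpa using hn) (Set.toFinite _)]
    simp [h]
  · by_cases hy : v = y
    · subst hy
      have : (tg G x v).neighborSet v = insert x (G.neighborSet v) := by
        ext t
        simp only [SimpleGraph.mem_neighborSet, tg_adj _ h, Set.mem_insert_iff]
        grind
      rw [this, Set.ncard_insert_of_notMem (by simpa using hn') (Set.toFinite _)]
      simp [hx]
    · have : (tg G x y).neighborSet v = (G.neighborSet v) := by
        ext t
        simp only [SimpleGraph.mem_neighborSet, tg_adj _ h]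
        grind
      simp [this, hx, hy]

theorem tg_dg_del (G : SimpleGraph V) {x y : V} (hn : G.Adj x y) (v : V) [Decidable (v = x)] [Decidable (v = y)] :
    dg (tg G x y) v + (if v = x then 1 else 0) + (if v = y then 1 else 0) = dg G v := by
  have h := hn.ne
  rw [← tg_dg_add (tg G x y) h (by rw [tg_adj _ h]; grind) v, tg_tg]

/-- cubic off `{x,y}`, where `x`, `y` are isolated -/
def Off (H : SimpleGraph V) (x y : V) : Prop :=
  (∀ v, v ≠ x → v ≠ y → dg H v = 3) ∧ dg H x = 0 ∧ dg H y = 0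

/-- the seven switches of the edge insertion -/
def sw1 (H : SimpleGraph V) (a b u v w z : V) : SimpleGraph V :=
  tg (tg (tg (tg (tg (tg (tg H u v) w z) a u) a v) b w) b z) a b

/-- the seven switches of the triangle insertion -/
def sw2 (H : SimpleGraph V) (x y a p q : V) : SimpleGraph V :=
  tg (tg (tg (tg (tg (tg (tg H a p) a q) a x) a y) x y) x p) y q

theorem sw1_spec (H : SimpleGraph V) (a b u v w z : V) (hab : a ≠ b) (hH : Off H a b)
    (huv : H.Adj u v) (hwz : H.Adj w z) (hne : ¬ ((w = u ∧ z = v) ∨ (w = v ∧ z = u))) :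
    (∀ t, dg (sw1 H a b u v w z) t = 3) ∧ (sw1 H a b u v w z).Adj a b ∧
    (sw1 H a b u v w z).Adj a u ∧ (sw1 H a b u v w z).Adj a v ∧
    (sw1 H a b u v w z).Adj b w ∧ (sw1 H a b u v w z).Adj b z ∧
    ¬ (sw1 H a b u v w z).Adj u v ∧ ¬ (sw1 H a b u v w z).Adj w z ∧
    u ≠ b ∧ v ≠ b ∧ w ≠ a ∧ z ≠ a := by
  classical
  obtain ⟨h3, ha, hb⟩ := hH
  have ha' := dg_eq_zero ha
  have hb' := dg_eq_zero hb
  have ha'' : ∀ w, ¬ H.Adj w a := fun w h => ha' w h.symm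
  have hb'' : ∀ w, ¬ H.Adj w b := fun w h => hb' w h.symm
  have huv' := huv.symm
  have hwz' := hwz.symm
  have n1 : u ≠ v := huv.ne
  have n2 : w ≠ z := hwz.ne
  have n3 : a ≠ u := by rintro rfl; exact ha' _ huv
  have n4 : a ≠ v := by rintro rfl; exact ha'' _ huv
  have n5 : a ≠ w := by rintro rfl; exact ha' _ hwz
  have n6 : a ≠ z := by rintro rfl; exact ha'' _ hwz
  have n7 : b ≠ u := by rintro rfl; exact hb' _ huv
  have n8 : b ≠ v := by rintro rfl; exact hb'' _ huv
  have n9 : b ≠ w := by rintro rfl; exact hb' _ hwz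
  have n10 : b ≠ z := by rintro rfl; exact hb'' _ hwz
  unfold sw1
  refine ⟨?_, ?_, ?_, ?_, ?_, ?_, ?_, ?_, n7.symm, n8.symm, n5.symm, n6.symm⟩
  · intro t
    have e1 := tg_dg_del H huv t
    have e2 := tg_dg_del (tg H u v) (x := w) (y := z) (by rw [tg_adj _ n1]; grind) t
    have e3 := tg_dg_add (tg (tg H u v) w z) (x := a) (y := u) n3
      (by simp only [tg_adj _ n1, tg_adj _ n2]; grind) t
    have e4 := tg_dg_add (tg (tg (tg H u v) w z) a u) (x := a) (y := v) n4
      (by simp only [tg_adj _ n1, tg_adj _ n2, tg_adj _ n3]; grind) t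
    have e5 := tg_dg_add (tg (tg (tg (tg H u v) w z) a u) a v) (x := b) (y := w) n9
      (by simp only [tg_adj _ n1, tg_adj _ n2, tg_adj _ n3, tg_adj _ n4]; grind) t
    have e6 := tg_dg_add (tg (tg (tg (tg (tg H u v) w z) a u) a v) b w) (x := b) (y := z) n10
      (by simp only [tg_adj _ n1, tg_adj _ n2, tg_adj _ n3, tg_adj _ n4, tg_adj _ n9]; grind) t
    have e7 := tg_dg_add (tg (tg (tg (tg (tg (tg H u v) w z) a u) a v) b w) b z)
      (x := a) (y := b) hab
      (by simp only [tg_adj _ n1, tg_adj _ n2, tg_adj _ n3, tg_adj _ n4, tg_adj _ n9,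
            tg_adj _ n10]; grind) t
    rw [e7, e6, e5, e4, e3]
    by_cases h1 : t = a
    · subst h1
      simp only [n3, n4, n5, n6, hab, ha, if_true, if_false] at *
      omega
    · by_cases h2 : t = b
      · subst h2
        simp only [n7, n8, n9, n10, h1, hb, if_true, if_false] at *
        omega
      · have := h3 t h1 h2
        simp only [h1, h2, if_false] at *
        omega
  all_goals
    simp only [tg_adj _ n1, tg_adj _ n2, tg_adj _ n3, tg_adj _ n4, tg_adj _ n9,
            tg_adj _ n10, tg_adj _ hab]
    grind

theorem sw2_spec (H : SimpleGraph V) (x y a b p q : V) (hxy : x ≠ y) (hH : Off H x y)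
    (hab : H.Adj a b) (hap : H.Adj a p) (haq : H.Adj a q) (hbp : b ≠ p) (hbq : b ≠ q)
    (hpq : p ≠ q) :
    (∀ t, dg (sw2 H x y a p q) t = 3) ∧ (sw2 H x y a p q).Adj a x ∧
    (sw2 H x y a p q).Adj a y ∧ (sw2 H x y a p q).Adj x y ∧
    (∀ t, (sw2 H x y a p q).Adj x t ↔ t = a ∨ t = y ∨ t = p) ∧
    (∀ t, (sw2 H x y a p q).Adj y t ↔ t = a ∨ t = x ∨ t = q) ∧
    (∀ t, (sw2 H x y a p q).Adj b t ↔ H.Adj b t) ∧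
    (∀ s t, s ≠ a → t ≠ a → s ≠ x → t ≠ x → s ≠ y → t ≠ y →
      ((sw2 H x y a p q).Adj s t ↔ H.Adj s t)) ∧ b ≠ x ∧ b ≠ y ∧ p ≠ y ∧ q ≠ x := by
  classical
  obtain ⟨h3, hx, hy⟩ := hH
  have hx' := dg_eq_zero hx
  have hy' := dg_eq_zero hy
  have hx'' : ∀ w, ¬ H.Adj w x := fun w h => hx' w h.symm
  have hy'' : ∀ w, ¬ H.Adj w y := fun w h => hy' w h.symm
  have n1 : a ≠ p := hap.ne
  have n2 : a ≠ q := haq.ne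
  have nab : a ≠ b := hab.ne
  have n3 : a ≠ x := by rintro rfl; exact hx' _ hap
  have n4 : a ≠ y := by rintro rfl; exact hy' _ hap
  have n5 : x ≠ p := by rintro rfl; exact hx'' _ hap
  have n6 : x ≠ q := by rintro rfl; exact hx'' _ haq
  have n7 : y ≠ p := by rintro rfl; exact hy'' _ hap
  have n8 : y ≠ q := by rintro rfl; exact hy'' _ haq
  have n9 : b ≠ x := by rintro rfl; exact hx'' _ hab
  have n10 : b ≠ y := by rintro rfl; exact hy'' _ hab
  unfold sw2
  refine ⟨?_, ?_, ?_, ?_, ?_, ?_, ?_, ?_, n9, n10, n7.symm, n6.symm⟩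
  · intro t
    have e1 := tg_dg_del H hap t
    have e2 := tg_dg_del (tg H a p) (x := a) (y := q) (by rw [tg_adj _ n1]; grind) t
    have e3 := tg_dg_add (tg (tg H a p) a q) (x := a) (y := x) n3
      (by simp only [tg_adj _ n1, tg_adj _ n2]; grind) t
    have e4 := tg_dg_add (tg (tg (tg H a p) a q) a x) (x := a) (y := y) n4
      (by simp only [tg_adj _ n1, tg_adj _ n2, tg_adj _ n3]; grind) t
    have e5 := tg_dg_add (tg (tg (tg (tg H a p) a q) a x) a y) (x := x) (y := y) hxy
      (by simp only [tg_adj _ n1, tg_adj _ n2, tg_adj _ n3, tg_adj _ n4]; grind) t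
    have e6 := tg_dg_add (tg (tg (tg (tg (tg H a p) a q) a x) a y) x y) (x := x) (y := p) n5
      (by simp only [tg_adj _ n1, tg_adj _ n2, tg_adj _ n3, tg_adj _ n4, tg_adj _ hxy]; grind) t
    have e7 := tg_dg_add (tg (tg (tg (tg (tg (tg H a p) a q) a x) a y) x y) x p)
      (x := y) (y := q) n8
      (by simp only [tg_adj _ n1, tg_adj _ n2, tg_adj _ n3, tg_adj _ n4, tg_adj _ hxy,
            tg_adj _ n5]; grind) t
    rw [e7, e6, e5, e4, e3]
    by_cases h1 : t = x
    · subst h1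
      simp only [n3.symm, n5, n6, hxy, hx, if_true, if_false] at *
      omega
    · by_cases h2 : t = y
      · subst h2
        simp only [n4.symm, n7, n8, h1, hy, if_true, if_false] at *
        omega
      · have := h3 t h1 h2
        simp only [h1, h2, if_false] at *
        by_cases h5 : t = a
        · subst h5
          simp only [n1, n2, if_true, if_false] at *
          omega
        · simp only [h5, if_false] at *
          omega
  all_goals
    simp only [tg_adj _ n1, tg_adj _ n2, tg_adj _ n3, tg_adj _ n4, tg_adj _ hxy,
            tg_adj _ n5, tg_adj _ n8]
    grind

/-- double edge switch -/
def sw3 (H : SimpleGraph V) (w z s t : V) : SimpleGraph V :=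
  tg (tg (tg (tg H w z) s t) w s) z t

theorem sw3_spec (H : SimpleGraph V) (b w z s t : V) (hbw : H.Adj b w) (hbz : H.Adj b z)
    (hwz : H.Adj w z) (hst : H.Adj s t) (hws : w ≠ s) (hws' : ¬ H.Adj w s)
    (hzt : z ≠ t) (hzt' : ¬ H.Adj z t) :
    (∀ v, dg (sw3 H w z s t) v = dg H v) ∧ (sw3 H w z s t).Adj b w ∧
    (sw3 H w z s t).Adj b z ∧ (sw3 H w z s t).Adj w s ∧ (sw3 H w z s t).Adj z t := by
  classical
  have n1 : w ≠ z := hwz.ne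
  have n2 : s ≠ t := hst.ne
  have hwt : w ≠ t := by rintro rfl; exact hws' hst.symm
  have hzs : z ≠ s := by rintro rfl; exact hzt' hst
  have hbs : b ≠ s := by rintro rfl; exact hws' hbw.symm
  have hbt : b ≠ t := by rintro rfl; exact hzt' hbz.symm
  have hbw' := hbw.ne
  have hbz' := hbz.ne
  have hst' := hst.symm
  have hwz' := hwz.symm
  unfold sw3
  refine ⟨?_, ?_, ?_, ?_, ?_⟩
  · intro v
    have e1 := tg_dg_del H hwz v
    have e2 := tg_dg_del (tg H w z) (x := s) (y := t) (by rw [tg_adj _ n1]; grind) v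
    have e3 := tg_dg_add (tg (tg H w z) s t) (x := w) (y := s) hws
      (by simp only [tg_adj _ n1, tg_adj _ n2]; grind) v
    have e4 := tg_dg_add (tg (tg (tg H w z) s t) w s) (x := z) (y := t) hzt
      (by simp only [tg_adj _ n1, tg_adj _ n2, tg_adj _ hws]; grind) v
    rw [e4, e3]
    omega
  all_goals
    simp only [tg_adj _ n1, tg_adj _ n2, tg_adj _ hws, tg_adj _ hzt]
    grind

section counting
open Classical

theorem card_eq_fib {α β : Type*} [Fintype β] (s : Finset (α × β)) (t : Finset α)
    (h : ∀ p ∈ s, p.1 ∈ t) :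
    s.card = ∑ a ∈ t, (univ.filter (fun b => (a, b) ∈ s)).card := by
  rw [Finset.card_eq_sum_card_fiberwise (f := Prod.fst) (t := t) (fun p hp => h p hp)]
  refine Finset.sum_congr rfl fun a _ => ?_
  symm
  refine Finset.card_bij (fun b _ => (a, b)) ?_ ?_ ?_
  · intro b hb
    simpa using hb
  · intro b _ b' _ h
    simpa using h
  · rintro ⟨a', b⟩ hb
    simp only [mem_filter] at hb
    obtain ⟨hb, rfl⟩ := hb
    exact ⟨b, by simpa using hb, rfl⟩

theorem card_le_step {α β : Type*} [Fintype β] (s : Finset (α × β)) (t : Finset α) (k : ℕ)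
    (h : ∀ p ∈ s, p.1 ∈ t)
    (h2 : ∀ a ∈ t, ∃ u : Finset β, (∀ b, (a, b) ∈ s → b ∈ u) ∧ u.card ≤ k) :
    s.card ≤ t.card * k := by
  rw [card_eq_fib s t h]
  refine (Finset.sum_le_card_nsmul _ _ k ?_).trans (by simp)
  intro a ha
  obtain ⟨u, hu, hk⟩ := h2 a ha
  refine le_trans (Finset.card_le_card ?_) hk
  intro b hb
  exact hu b (by simpa using hb)

theorem card_ge_step {α β : Type*} [Fintype β] (s : Finset (α × β)) (t : Finset α) (k : ℕ)
    (h2 : ∀ a ∈ t, ∃ u : Finset β, (∀ b ∈ u, (a, b) ∈ s) ∧ k ≤ u.card) :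
    t.card * k ≤ s.card := by
  have h3 : (s.filter (fun p => p.1 ∈ t)).card ≤ s.card := Finset.card_filter_le _ _
  refine le_trans ?_ h3
  rw [card_eq_fib _ t (by simp)]
  refine le_trans (by simp) (Finset.card_nsmul_le_sum t _ k ?_)
  intro a ha
  obtain ⟨u, hu, hk⟩ := h2 a ha
  refine hk.trans (Finset.card_le_card ?_)
  intro b hb
  simp [ha, hu b hb]

theorem card_eq_step {α β : Type*} [Fintype β] (s : Finset (α × β)) (t : Finset α) (k : ℕ)
    (h : ∀ p ∈ s, p.1 ∈ t)
    (h2 : ∀ a ∈ t, ∃ u : Finset β, (∀ b, (a, b) ∈ s ↔ b ∈ u) ∧ u.card = k) :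
    s.card = t.card * k := by
  refine le_antisymm (card_le_step s t k h ?_) (card_ge_step s t k ?_)
  · intro a ha
    obtain ⟨u, hu, hk⟩ := h2 a ha
    exact ⟨u, fun b hb => (hu b).1 hb, hk.le⟩
  · intro a ha
    obtain ⟨u, hu, hk⟩ := h2 a ha
    exact ⟨u, fun b hb => (hu b).2 hb, hk.ge⟩

/-- neighbours -/
noncomputable def nb (G : SimpleGraph V) (v : V) : Finset V := univ.filter (fun w => G.Adj v w)

theorem mem_nb {G : SimpleGraph V} {v w : V} : w ∈ nb G v ↔ G.Adj v w := by simp [nb]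

theorem card_nb (G : SimpleGraph V) (v : V) : (nb G v).card = dg G v := by
  unfold dg
  rw [← Set.ncard_coe_finset]
  congr 1
  ext w
  simp [nb]

/-- degree 3 on `A`, isolated off `A` -/
def Reg (A : Finset V) (H : SimpleGraph V) : Prop :=
  (∀ v ∈ A, dg H v = 3) ∧ ∀ v, v ∉ A → dg H v = 0

theorem Reg.mem {A : Finset V} {H : SimpleGraph V} (h : Reg A H) {v w : V} (hvw : H.Adj v w) :
    v ∈ A := by
  by_contra hv
  exact dg_eq_zero (h.2 v hv) w hvw

theorem Reg.nb_le {A : Finset V} {H : SimpleGraph V} (h : Reg A H) (v : V) :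
    (nb H v).card ≤ 3 := by
  rw [card_nb]
  by_cases hv : v ∈ A
  · exact (h.1 v hv).le
  · rw [h.2 v hv]; omega

theorem Reg.nb_eq {A : Finset V} {H : SimpleGraph V} (h : Reg A H) {v : V} (hv : v ∈ A) :
    (nb H v).card = 3 := by
  rw [card_nb]
  exact h.1 v hv

/-- the graphs regular on `A` -/
noncomputable def CS (A : Finset V) : Finset (SimpleGraph V) := univ.filter (Reg A)

theorem mem_CS {A : Finset V} {H : SimpleGraph V} : H ∈ CS A ↔ Reg A H := by simp [CS]

theorem card_nb2 {A : Finset V} {H : SimpleGraph V} (h : Reg A H) {a b : V} (hab : H.Adj a b) :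
    (univ.filter (fun u => H.Adj a u ∧ u ≠ b)).card = 2 := by
  have : univ.filter (fun u => H.Adj a u ∧ u ≠ b) = (nb H a).erase b := by
    ext u; simp [mem_nb, and_comm]
  rw [this, Finset.card_erase_of_mem (mem_nb.2 hab), h.nb_eq (h.mem hab)]

theorem card_nb1 {A : Finset V} {H : SimpleGraph V} (h : Reg A H) {a b c : V} (hab : H.Adj a b)
    (hac : H.Adj a c) (hcb : c ≠ b) :
    (univ.filter (fun u => H.Adj a u ∧ u ≠ b ∧ u ≠ c)).card = 1 := by
  have : univ.filter (fun u => H.Adj a u ∧ u ≠ b ∧ u ≠ c) = ((nb H a).erase b).erase c := by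
    ext u; simp [mem_nb]; tauto
  rw [this, Finset.card_erase_of_mem (by simp [mem_nb, hcb, hac]),
    Finset.card_erase_of_mem (mem_nb.2 hab), h.nb_eq (h.mem hab)]

/-- tuples -/
abbrev T7 (V : Type*) := (((((SimpleGraph V × V) × V) × V) × V) × V) × V

/-- ordered data around a dart -/
def LP (G : SimpleGraph V) (a b u v w z : V) : Prop :=
  G.Adj a b ∧ (G.Adj a u ∧ u ≠ b) ∧ (G.Adj a v ∧ v ≠ b ∧ v ≠ u) ∧
    (G.Adj b w ∧ w ≠ a) ∧ (G.Adj b z ∧ z ≠ a ∧ z ≠ w)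

/-- the set of cubic graphs with ordered data around a dart -/
noncomputable def LS (A : Finset V) : Finset (T7 V) :=
  univ.filter (fun ⟨⟨⟨⟨⟨⟨G, a⟩, b⟩, u⟩, v⟩, w⟩, z⟩ => Reg A G ∧ LP G a b u v w z)

theorem mem_LS {A : Finset V} {G : SimpleGraph V} {a b u v w z : V} :
    ((((((G, a), b), u), v), w), z) ∈ LS A ↔ Reg A G ∧ LP G a b u v w z := by
  simp [LS]

/-- darts -/
noncomputable def D1 (A : Finset V) : Finset (SimpleGraph V × V) := CS A ×ˢ A

noncomputable def D2 (A : Finset V) : Finset ((SimpleGraph V × V) × V) :=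
  univ.filter (fun ⟨⟨G, a⟩, b⟩ => Reg A G ∧ G.Adj a b)

theorem card_D2 (A : Finset V) : (D2 A).card = (CS A).card * (A.card * 3) := by
  have h0 : (D1 A).card = (CS A).card * A.card := by simp [D1]
  have key : ∀ p ∈ D1 A, ∃ u : Finset V, (∀ b, (p, b) ∈ D2 A ↔ b ∈ u) ∧ u.card = 3 := by
    rintro ⟨G, a⟩ hp
    simp only [D1, mem_product, mem_CS] at hp
    refine ⟨nb G a, fun b => ?_, hp.1.nb_eq hp.2⟩
    simp [D2, hp.1, mem_nb]
  rw [← mul_assoc, ← h0]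
  refine card_eq_step _ _ _ ?_ key
  rintro ⟨⟨G, a⟩, b⟩ hp
  simp only [D2, mem_filter, mem_univ, true_and] at hp
  simp only [D1, mem_product, mem_CS]
  exact ⟨hp.1, hp.1.mem hp.2⟩

theorem card_LS (A : Finset V) : (LS A).card = (CS A).card * (A.card * 12) := by
  let s3 : Finset (((SimpleGraph V × V) × V) × V) :=
    univ.filter (fun ⟨⟨⟨G, a⟩, b⟩, u⟩ => Reg A G ∧ G.Adj a b ∧ G.Adj a u ∧ u ≠ b)
  let s4 : Finset ((((SimpleGraph V × V) × V) × V) × V) :=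
    univ.filter (fun ⟨⟨⟨⟨G, a⟩, b⟩, u⟩, v⟩ => Reg A G ∧ G.Adj a b ∧ (G.Adj a u ∧ u ≠ b) ∧
      G.Adj a v ∧ v ≠ b ∧ v ≠ u)
  let s5 : Finset (((((SimpleGraph V × V) × V) × V) × V) × V) :=
    univ.filter (fun ⟨⟨⟨⟨⟨G, a⟩, b⟩, u⟩, v⟩, w⟩ => Reg A G ∧ G.Adj a b ∧ (G.Adj a u ∧ u ≠ b) ∧
      (G.Adj a v ∧ v ≠ b ∧ v ≠ u) ∧ G.Adj b w ∧ w ≠ a)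
  have h3 : s3.card = (D2 A).card * 2 := by
    have key : ∀ p ∈ D2 A, ∃ u : Finset V, (∀ b, (p, b) ∈ s3 ↔ b ∈ u) ∧ u.card = 2 := by
      rintro ⟨⟨G, a⟩, b⟩ hp
      simp only [D2, mem_filter, mem_univ, true_and] at hp
      refine ⟨_, fun u => ?_, card_nb2 hp.1 hp.2⟩
      simp [s3, hp.1, hp.2]
    refine card_eq_step _ _ _ ?_ key
    rintro ⟨⟨⟨G, a⟩, b⟩, u⟩ hp
    simp only [s3, mem_filter, mem_univ, true_and] at hp
    simp [D2, hp]
  have h4 : s4.card = s3.card * 1 := by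
    have key : ∀ p ∈ s3, ∃ u : Finset V, (∀ b, (p, b) ∈ s4 ↔ b ∈ u) ∧ u.card = 1 := by
      rintro ⟨⟨⟨G, a⟩, b⟩, u⟩ hp
      simp only [s3, mem_filter, mem_univ, true_and] at hp
      refine ⟨_, fun u => ?_, card_nb1 hp.1 hp.2.1 hp.2.2.1 hp.2.2.2⟩
      simp [s4, hp]
    refine card_eq_step _ _ _ ?_ key
    rintro ⟨⟨⟨⟨G, a⟩, b⟩, u⟩, v⟩ hp
    simp only [s4, mem_filter, mem_univ, true_and] at hp
    simp [s3, hp]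
  have h5 : s5.card = s4.card * 2 := by
    have key : ∀ p ∈ s4, ∃ u : Finset V, (∀ b, (p, b) ∈ s5 ↔ b ∈ u) ∧ u.card = 2 := by
      rintro ⟨⟨⟨⟨G, a⟩, b⟩, u⟩, v⟩ hp
      simp only [s4, mem_filter, mem_univ, true_and] at hp
      refine ⟨_, fun u => ?_, card_nb2 hp.1 hp.2.1.symm⟩
      simp [s5, hp]
    refine card_eq_step _ _ _ ?_ key
    rintro ⟨⟨⟨⟨⟨G, a⟩, b⟩, u⟩, v⟩, w⟩ hp
    simp only [s5, mem_filter, mem_univ, true_and] at hp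
    simp [s4, hp]
  have h6 : (LS A).card = s5.card * 1 := by
    have key : ∀ p ∈ s5, ∃ u : Finset V, (∀ b, (p, b) ∈ LS A ↔ b ∈ u) ∧ u.card = 1 := by
      rintro ⟨⟨⟨⟨⟨G, a⟩, b⟩, u⟩, v⟩, w⟩ hp
      simp only [s5, mem_filter, mem_univ, true_and] at hp
      refine ⟨_, fun u => ?_, card_nb1 hp.1 hp.2.1.symm hp.2.2.2.2.1 hp.2.2.2.2.2⟩
      simp [mem_LS, LP, hp]
    refine card_eq_step _ _ _ ?_ key
    rintro ⟨⟨⟨⟨⟨⟨G, a⟩, b⟩, u⟩, v⟩, w⟩, z⟩ hp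
    simp only [mem_LS, LP] at hp
    simp [s5, hp]
  rw [h6, h5, h4, h3, card_D2]
  ring

/-- tuples with a triangle at `b` -/
noncomputable def TS (A : Finset V) : Finset (T7 V) :=
  (LS A).filter (fun ⟨⟨⟨⟨⟨⟨G, _⟩, _⟩, _⟩, _⟩, w⟩, z⟩ => G.Adj w z)

/-- ordered triangles -/
noncomputable def SS (A : Finset V) : Finset (((SimpleGraph V × V) × V) × V) :=
  univ.filter (fun ⟨⟨⟨G, b⟩, w⟩, z⟩ => Reg A G ∧ G.Adj b w ∧ G.Adj b z ∧ z ≠ w ∧ G.Adj w z)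

theorem card_TS (A : Finset V) : (TS A).card ≤ (SS A).card * 2 := by
  let t4 : Finset ((((SimpleGraph V × V) × V) × V) × V) :=
    univ.filter (fun ⟨⟨⟨⟨G, b⟩, w⟩, z⟩, a⟩ => (Reg A G ∧ G.Adj b w ∧ G.Adj b z ∧ z ≠ w ∧ G.Adj w z) ∧
      G.Adj b a ∧ a ≠ w ∧ a ≠ z)
  let t5 : Finset (((((SimpleGraph V × V) × V) × V) × V) × V) :=
    univ.filter (fun ⟨⟨⟨⟨⟨G, b⟩, w⟩, z⟩, a⟩, u⟩ =>
      (Reg A G ∧ G.Adj b w ∧ G.Adj b z ∧ z ≠ w ∧ G.Adj w z) ∧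
      (G.Adj b a ∧ a ≠ w ∧ a ≠ z) ∧ (G.Adj a u ∧ u ≠ b))
  let t6 : Finset (T7 V) :=
    univ.filter (fun ⟨⟨⟨⟨⟨⟨G, b⟩, w⟩, z⟩, a⟩, u⟩, v⟩ =>
      (Reg A G ∧ G.Adj b w ∧ G.Adj b z ∧ z ≠ w ∧ G.Adj w z) ∧
      (G.Adj b a ∧ a ≠ w ∧ a ≠ z) ∧ (G.Adj a u ∧ u ≠ b) ∧ (G.Adj a v ∧ v ≠ b ∧ v ≠ u))
  have h4 : t4.card ≤ (SS A).card * 1 := by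
    refine card_le_step _ _ _ ?_ ?_
    · rintro ⟨⟨⟨⟨G, b⟩, w⟩, z⟩, a⟩ hp
      simp only [t4, mem_filter, mem_univ, true_and] at hp
      simp only [SS, mem_filter, mem_univ, true_and]
      exact hp.1
    · rintro ⟨⟨⟨G, b⟩, w⟩, z⟩ hp
      simp only [SS, mem_filter, mem_univ, true_and] at hp
      refine ⟨_, fun u => ?_, (card_nb1 hp.1 hp.2.1 hp.2.2.1 hp.2.2.2.1).le⟩
      simp [t4, hp]
  have h5 : t5.card ≤ t4.card * 2 := by
    refine card_le_step _ _ _ ?_ ?_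
    · rintro ⟨⟨⟨⟨⟨G, b⟩, w⟩, z⟩, a⟩, u⟩ hp
      simp only [t5, mem_filter, mem_univ, true_and] at hp
      simp only [t4, mem_filter, mem_univ, true_and]
      exact ⟨hp.1, hp.2.1⟩
    · rintro ⟨⟨⟨⟨G, b⟩, w⟩, z⟩, a⟩ hp
      simp only [t4, mem_filter, mem_univ, true_and] at hp
      refine ⟨_, fun u => ?_, (card_nb2 hp.1.1 hp.2.1.symm).le⟩
      simp [t5, hp]
  have h6 : t6.card ≤ t5.card * 1 := by
    refine card_le_step _ _ _ ?_ ?_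
    · rintro ⟨⟨⟨⟨⟨⟨G, b⟩, w⟩, z⟩, a⟩, u⟩, v⟩ hp
      simp only [t6, mem_filter, mem_univ, true_and] at hp
      simp only [t5, mem_filter, mem_univ, true_and]
      exact ⟨hp.1, hp.2.1, hp.2.2.1⟩
    · rintro ⟨⟨⟨⟨⟨G, b⟩, w⟩, z⟩, a⟩, u⟩ hp
      simp only [t5, mem_filter, mem_univ, true_and] at hp
      refine ⟨_, fun u => ?_, (card_nb1 hp.1.1 hp.2.1.1.symm hp.2.2.1 hp.2.2.2).le⟩
      simp [t6, hp]
  have h7 : (TS A).card ≤ t6.card := by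
    refine Finset.card_le_card_of_injOn
      (fun ⟨⟨⟨⟨⟨⟨G, a⟩, b⟩, u⟩, v⟩, w⟩, z⟩ => ((((((G, b), w), z), a), u), v)) ?_ ?_
    · rintro ⟨⟨⟨⟨⟨⟨G, a⟩, b⟩, u⟩, v⟩, w⟩, z⟩ hp
      simp only [TS, coe_filter, Set.mem_ofPred_eq, mem_LS, LP] at hp
      simp only [t6, coe_filter, mem_univ, true_and, Set.mem_ofPred_eq]
      obtain ⟨⟨hR, hab, ⟨hu, hub⟩, ⟨hv, hvb, hvu⟩, ⟨hw, hwa⟩, hz, hza, hzw⟩, hwz⟩ := hp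
      exact ⟨⟨hR, hw, hz, hzw, hwz⟩, ⟨hab.symm, hwa.symm, hza.symm⟩, ⟨hu, hub⟩, hv, hvb, hvu⟩
    · rintro ⟨⟨⟨⟨⟨⟨G, a⟩, b⟩, u⟩, v⟩, w⟩, z⟩ _ ⟨⟨⟨⟨⟨⟨G', a'⟩, b'⟩, u'⟩, v'⟩, w'⟩, z'⟩ _ h
      simp only [Prod.mk.injEq] at h ⊢
      tauto
  omega

/-- the number of darts -/
theorem card_darts {A : Finset V} {H : SimpleGraph V} (h : Reg A H) :
    (univ.filter (fun p : V × V => H.Adj p.1 p.2)).card = A.card * 3 := by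
  have key : ∀ a ∈ A, ∃ u : Finset V, (∀ b, (a, b) ∈
      univ.filter (fun p : V × V => H.Adj p.1 p.2) ↔ b ∈ u) ∧ u.card = 3 := by
    intro a ha
    exact ⟨nb H a, fun b => by simp [mem_nb], h.nb_eq ha⟩
  refine card_eq_step _ _ _ ?_ key
  rintro ⟨a, b⟩ hp
  simp only [mem_filter, mem_univ, true_and] at hp
  exact h.mem hp

theorem card_bad {A : Finset V} {H : SimpleGraph V} (h : Reg A H) (w : V) :
    (univ.filter (fun p : V × V => H.Adj p.1 p.2 ∧ p.1 ∈ insert w (nb H w))).card ≤ 12 := by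
  have : (insert w (nb H w)).card ≤ 4 := (card_insert_le _ _).trans (by have := h.nb_le w; omega)
  refine (card_le_step _ (insert w (nb H w)) 3 ?_ ?_).trans (by omega)
  · rintro ⟨a, b⟩ hp
    simp only [mem_filter, mem_univ, true_and] at hp
    exact hp.2
  · intro a _
    refine ⟨nb H a, fun b hb => ?_, h.nb_le a⟩
    simp only [mem_filter, mem_univ, true_and] at hb
    exact mem_nb.2 hb.1

theorem card_bad' {A : Finset V} {H : SimpleGraph V} (h : Reg A H) (w : V) :
    (univ.filter (fun p : V × V => H.Adj p.1 p.2 ∧ p.2 ∈ insert w (nb H w))).card ≤ 12 := by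
  refine le_trans (Finset.card_le_card_of_injOn Prod.swap ?_ ?_) (card_bad h w)
  · rintro ⟨a, b⟩ hp
    simp only [coe_filter, mem_univ, true_and, Set.mem_ofPred_eq] at hp
    simp only [coe_filter, mem_univ, true_and, Set.mem_ofPred_eq, Prod.swap]
    exact ⟨hp.1.symm, hp.2⟩
  · exact fun _ _ _ _ h => Prod.swap_injective h

theorem card_good {A : Finset V} {H : SimpleGraph V} (h : Reg A H) (w z : V) :
    A.card * 3 - 24 ≤ (univ.filter (fun p : V × V => H.Adj p.1 p.2 ∧
      (w ≠ p.1 ∧ ¬ H.Adj w p.1) ∧ (z ≠ p.2 ∧ ¬ H.Adj z p.2))).card := by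
  have h1 : univ.filter (fun p : V × V => H.Adj p.1 p.2) ⊆
      (univ.filter (fun p : V × V => H.Adj p.1 p.2 ∧
      (w ≠ p.1 ∧ ¬ H.Adj w p.1) ∧ (z ≠ p.2 ∧ ¬ H.Adj z p.2))) ∪
      (univ.filter (fun p : V × V => H.Adj p.1 p.2 ∧ p.1 ∈ insert w (nb H w)) ∪
      univ.filter (fun p : V × V => H.Adj p.1 p.2 ∧ p.2 ∈ insert z (nb H z))) := by
    rintro ⟨a, b⟩ hp
    simp only [mem_filter, mem_univ, true_and, mem_union, mem_insert, mem_nb] at hp ⊢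
    grind
  have h2 := Finset.card_le_card h1
  rw [card_darts h] at h2
  have h3 := (h2.trans (card_union_le _ _)).trans (Nat.add_le_add_left (card_union_le _ _) _)
  have h4 := card_bad h w
  have h5 := card_bad' h z
  omega

theorem card_SS (A : Finset V) :
    (SS A).card * (A.card * 3 - 24) ≤ (CS A).card * (A.card * 81) := by
  let s5 : Finset ((((SimpleGraph V × V) × V) × V) × (V × V)) :=
    univ.filter (fun ⟨⟨⟨⟨G, b⟩, w⟩, z⟩, p⟩ =>
      (Reg A G ∧ G.Adj b w ∧ G.Adj b z ∧ z ≠ w ∧ G.Adj w z) ∧ G.Adj p.1 p.2 ∧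
      (w ≠ p.1 ∧ ¬ G.Adj w p.1) ∧ (z ≠ p.2 ∧ ¬ G.Adj z p.2))
  have h5 : (SS A).card * (A.card * 3 - 24) ≤ s5.card := by
    refine card_ge_step _ _ _ ?_
    rintro ⟨⟨⟨G, b⟩, w⟩, z⟩ hp
    simp only [SS, mem_filter, mem_univ, true_and] at hp
    refine ⟨_, fun p hq => ?_, card_good hp.1 w z⟩
    simp only [mem_filter, mem_univ, true_and, s5] at hq ⊢
    exact ⟨hp, hq⟩
  let r3 : Finset (((SimpleGraph V × V) × V) × V) :=
    univ.filter (fun ⟨⟨⟨G, b⟩, w⟩, z⟩ => Reg A G ∧ G.Adj b w ∧ G.Adj b z)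
  let r4 : Finset ((((SimpleGraph V × V) × V) × V) × V) :=
    univ.filter (fun ⟨⟨⟨⟨G, b⟩, w⟩, z⟩, s⟩ => (Reg A G ∧ G.Adj b w ∧ G.Adj b z) ∧ G.Adj w s)
  let r5 : Finset (((((SimpleGraph V × V) × V) × V) × V) × V) :=
    univ.filter (fun ⟨⟨⟨⟨⟨G, b⟩, w⟩, z⟩, s⟩, t⟩ => (Reg A G ∧ G.Adj b w ∧ G.Adj b z) ∧
      G.Adj w s ∧ G.Adj z t)
  have g3 : r3.card ≤ (D2 A).card * 3 := by
    refine card_le_step _ _ _ ?_ ?_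
    · rintro ⟨⟨⟨G, b⟩, w⟩, z⟩ hp
      simp only [r3, mem_filter, mem_univ, true_and] at hp
      simp [D2, hp]
    · rintro ⟨⟨G, b⟩, w⟩ hp
      simp only [D2, mem_filter, mem_univ, true_and] at hp
      refine ⟨nb G b, fun b hb => ?_, hp.1.nb_le b⟩
      simp only [r3, mem_filter, mem_univ, true_and] at hb
      exact mem_nb.2 hb.2.2
  have g4 : r4.card ≤ r3.card * 3 := by
    refine card_le_step _ _ _ ?_ ?_
    · rintro ⟨⟨⟨⟨G, b⟩, w⟩, z⟩, s⟩ hp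
      simp only [r4, mem_filter, mem_univ, true_and] at hp
      simp [r3, hp]
    · rintro ⟨⟨⟨G, b⟩, w⟩, z⟩ hp
      simp only [r3, mem_filter, mem_univ, true_and] at hp
      refine ⟨nb G w, fun b hb => ?_, hp.1.nb_le w⟩
      simp only [r4, mem_filter, mem_univ, true_and] at hb
      exact mem_nb.2 hb.2
  have g5 : r5.card ≤ r4.card * 3 := by
    refine card_le_step _ _ _ ?_ ?_
    · rintro ⟨⟨⟨⟨⟨G, b⟩, w⟩, z⟩, s⟩, t⟩ hp
      simp only [r5, mem_filter, mem_univ, true_and] at hp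
      simp [r4, hp]
    · rintro ⟨⟨⟨⟨G, b⟩, w⟩, z⟩, s⟩ hp
      simp only [r4, mem_filter, mem_univ, true_and] at hp
      refine ⟨nb G z, fun b hb => ?_, hp.1.1.nb_le z⟩
      simp only [r5, mem_filter, mem_univ, true_and] at hb
      exact mem_nb.2 hb.2.2
  have h7 : s5.card ≤ r5.card := by
    refine Finset.card_le_card_of_injOn
      (fun ⟨⟨⟨⟨G, b⟩, w⟩, z⟩, p⟩ => (((((sw3 G w z p.1 p.2, b), w), z), p.1), p.2)) ?_ ?_
    · rintro ⟨⟨⟨⟨G, b⟩, w⟩, z⟩, ⟨s, t⟩⟩ hp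
      simp only [s5, coe_filter, mem_univ, true_and, Set.mem_ofPred_eq] at hp
      simp only [r5, coe_filter, mem_univ, true_and, Set.mem_ofPred_eq]
      obtain ⟨⟨hR, hbw, hbz, hzw, hwz⟩, hst, ⟨hws, hws'⟩, hzt, hzt'⟩ := hp
      obtain ⟨q1, q2, q3, q4, q5⟩ := sw3_spec G b w z s t hbw hbz hwz hst hws hws' hzt hzt'
      refine ⟨⟨⟨fun v hv => ?_, fun v hv => ?_⟩, q2, q3⟩, q4, q5⟩
      · rw [q1, hR.1 v hv]
      · rw [q1, hR.2 v hv]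
    · rintro ⟨⟨⟨⟨G, b⟩, w⟩, z⟩, ⟨s, t⟩⟩ _ ⟨⟨⟨⟨G', b'⟩, w'⟩, z'⟩, ⟨s', t'⟩⟩ _ h
      simp only [Prod.mk.injEq] at h ⊢
      obtain ⟨⟨⟨⟨⟨hG, rfl⟩, rfl⟩, rfl⟩, rfl⟩, rfl⟩ := h
      exact ⟨⟨⟨⟨tg_inj (tg_inj (tg_inj (tg_inj hG))), rfl⟩, rfl⟩, rfl⟩, rfl, rfl⟩
  have := card_D2 A
  nlinarith
end counting

section main
open Classical

/-- complement of a pair -/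
noncomputable def AP (p : V × V) : Finset V := univ \ {p.1, p.2}

theorem Reg.off {p : V × V} {H : SimpleGraph V} (h : Reg (AP p) H) : Off H p.1 p.2 := by
  refine ⟨fun v h1 h2 => h.1 v (by simp [AP, h1, h2]), h.2 _ (by simp [AP]), h.2 _ (by simp [AP])⟩

theorem card_AP {p : V × V} (h : p.1 ≠ p.2) : (AP p).card + 2 = Fintype.card V := by
  have h1 : ({p.1, p.2} : Finset V).card = 2 := Finset.card_pair h
  have h2 := Finset.card_sdiff_add_card_eq_card (Finset.subset_univ ({p.1, p.2} : Finset V))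
  rw [h1] at h2
  simpa [AP] using h2

/-- pairs of edges -/
noncomputable def IS (A : Finset V) : Finset (((SimpleGraph V × V) × V) × (V × V)) :=
  univ.filter (fun ⟨⟨⟨G, u⟩, v⟩, p⟩ => (Reg A G ∧ G.Adj u v) ∧ G.Adj p.1 p.2 ∧
    ¬ ((p.1 = u ∧ p.2 = v) ∨ (p.1 = v ∧ p.2 = u)))

theorem card_IS (A : Finset V) :
    (CS A).card * (A.card * 3) * (A.card * 3 - 2) ≤ (IS A).card := by
  rw [← card_D2]
  refine card_ge_step _ _ _ ?_
  rintro ⟨⟨G, u⟩, v⟩ hp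
  simp only [D2, mem_filter, mem_univ, true_and] at hp
  refine ⟨(univ.filter (fun p : V × V => G.Adj p.1 p.2)) \ {(u, v), (v, u)}, ?_, ?_⟩
  · rintro ⟨w, z⟩ hq
    simp only [mem_sdiff, mem_filter, mem_univ, true_and, mem_insert, mem_singleton,
      Prod.mk.injEq] at hq
    simp only [IS, mem_filter, mem_univ, true_and]
    exact ⟨hp, hq⟩
  · have h1 := Finset.le_card_sdiff ({(u, v), (v, u)} : Finset (V × V))
      (univ.filter (fun p : V × V => G.Adj p.1 p.2))
    rw [card_darts hp.1] at h1
    have h2 : ({(u, v), (v, u)} : Finset (V × V)).card ≤ 2 := Finset.card_le_two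
    omega

theorem reg_univ {G : SimpleGraph V} (h : ∀ t, dg G t = 3) : Reg univ G :=
  ⟨fun v _ => h v, fun v hv => absurd (mem_univ v) hv⟩

/-- first map -/
noncomputable def f1 : (Σ _ : V × V, ((SimpleGraph V × V) × V) × (V × V)) → T7 V :=
  fun ⟨⟨a, b⟩, ⟨⟨⟨H, u⟩, v⟩, ⟨w, z⟩⟩⟩ => ((((((sw1 H a b u v w z, a), b), u), v), w), z)

/-- second map -/
noncomputable def f2 : (Σ _ : V × V, T7 V) → T7 V :=
  fun ⟨⟨x, y⟩, ⟨⟨⟨⟨⟨⟨H, a⟩, b⟩, p⟩, q⟩, w⟩, z⟩⟩ => ((((((sw2 H x y a p q, a), b), x), y), w), z)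

/-- swap the ends of the dart -/
def sw7 : T7 V → T7 V :=
  fun ⟨⟨⟨⟨⟨⟨G, a⟩, b⟩, u⟩, v⟩, w⟩, z⟩ => ((((((G, b), a), w), z), u), v)

theorem sw7_inj : Function.Injective (sw7 : T7 V → T7 V) := by
  rintro ⟨⟨⟨⟨⟨⟨G, a⟩, b⟩, u⟩, v⟩, w⟩, z⟩ ⟨⟨⟨⟨⟨⟨G', a'⟩, b'⟩, u'⟩, v'⟩, w'⟩, z'⟩ h
  simp only [sw7, Prod.mk.injEq] at h ⊢
  tauto

noncomputable def L1 : Finset (T7 V) := (LS univ).filter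
  (fun ⟨⟨⟨⟨⟨⟨G, _⟩, _⟩, u⟩, v⟩, w⟩, z⟩ => ¬ G.Adj u v ∧ ¬ G.Adj w z)
noncomputable def L2 : Finset (T7 V) := (LS univ).filter
  (fun ⟨⟨⟨⟨⟨⟨G, _⟩, _⟩, u⟩, v⟩, _⟩, _⟩ => G.Adj u v)
noncomputable def L3 : Finset (T7 V) := (LS univ).filter
  (fun ⟨⟨⟨⟨⟨⟨G, _⟩, _⟩, u⟩, v⟩, w⟩, z⟩ => ¬ G.Adj u v ∧ G.Adj w z)

theorem card_L123 : (L1 (V := V)).card + (L2 (V := V)).card + (L3 (V := V)).card ≤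
    (LS (univ : Finset V)).card := by
  have d1 : Disjoint (L1 (V := V)) L2 := by
    rw [Finset.disjoint_left]
    rintro ⟨⟨⟨⟨⟨⟨G, a⟩, b⟩, u⟩, v⟩, w⟩, z⟩ h1 h2
    simp only [L1, L2, mem_filter] at h1 h2
    tauto
  have d2 : Disjoint (L1 (V := V) ∪ L2) L3 := by
    rw [Finset.disjoint_left]
    rintro ⟨⟨⟨⟨⟨⟨G, a⟩, b⟩, u⟩, v⟩, w⟩, z⟩ h1 h2
    simp only [L1, L2, L3, mem_filter, mem_union] at h1 h2
    tauto
  rw [← Finset.card_union_of_disjoint d1, ← Finset.card_union_of_disjoint d2]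
  refine Finset.card_le_card ?_
  intro x hx
  simp only [L1, L2, L3, mem_union, mem_filter] at hx
  tauto

theorem count1 : ∑ p ∈ (univ : Finset V).offDiag, (IS (AP p)).card ≤ (L1 (V := V)).card := by
  rw [← Finset.card_sigma]
  refine Finset.card_le_card_of_injOn f1 ?_ ?_
  · rintro ⟨⟨a, b⟩, ⟨⟨⟨H, u⟩, v⟩, ⟨w, z⟩⟩⟩ h
    simp only [mem_coe, mem_sigma, mem_offDiag, mem_univ, true_and, IS, mem_filter] at h
    obtain ⟨hab, ⟨hR, huv⟩, hwz, hne⟩ := h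
    obtain ⟨q1, q2, q3, q4, q5, q6, q7, q8, q9, q10, q11, q12⟩ :=
      sw1_spec H a b u v w z hab hR.off huv hwz hne
    simp only [f1, L1, mem_coe, mem_filter, mem_LS, LP]
    exact ⟨⟨reg_univ q1, q2, ⟨q3, q9⟩, ⟨q4, q10, huv.ne.symm⟩, ⟨q5, q11⟩, q6, q12, hwz.ne.symm⟩,
      q7, q8⟩
  · rintro ⟨⟨a, b⟩, ⟨⟨⟨H, u⟩, v⟩, ⟨w, z⟩⟩⟩ _ ⟨⟨a', b'⟩, ⟨⟨⟨H', u'⟩, v'⟩, ⟨w', z'⟩⟩⟩ _ h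
    simp only [f1, Prod.mk.injEq] at h
    obtain ⟨⟨⟨⟨⟨⟨hG, rfl⟩, rfl⟩, rfl⟩, rfl⟩, rfl⟩, rfl⟩ := h
    obtain rfl := tg_inj (tg_inj (tg_inj (tg_inj (tg_inj (tg_inj (tg_inj hG))))))
    rfl

theorem f2_inj : Set.InjOn (f2 (V := V))
    (((univ : Finset V).offDiag.sigma fun p => LS (AP p)) : Finset (Σ _ : V × V, T7 V)) := by
  rintro ⟨⟨x, y⟩, ⟨⟨⟨⟨⟨⟨H, a⟩, b⟩, p⟩, q⟩, w⟩, z⟩⟩ h1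
    ⟨⟨x', y'⟩, ⟨⟨⟨⟨⟨⟨H', a'⟩, b'⟩, p'⟩, q'⟩, w'⟩, z'⟩⟩ h2 h
  simp only [mem_coe, mem_sigma, mem_offDiag, mem_univ, true_and, mem_LS, LP] at h1 h2
  simp only [f2, Prod.mk.injEq] at h
  obtain ⟨⟨⟨⟨⟨⟨hG, rfl⟩, rfl⟩, rfl⟩, rfl⟩, rfl⟩, rfl⟩ := h
  obtain ⟨hxy, hR, hab, ⟨hap, hpb⟩, ⟨haq, hqb, hqp⟩, _⟩ := h1
  obtain ⟨-, hR', hab', ⟨hap', hpb'⟩, ⟨haq', hqb', hqp'⟩, _⟩ := h2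
  obtain ⟨-, -, -, -, q5, q6, -, -, -, -, q11, q12⟩ := sw2_spec H x y a b p q hxy hR.off hab hap haq hpb.symm
    hqb.symm hqp.symm
  obtain ⟨-, -, -, -, r5, r6, -, -, -, -, r11, r12⟩ := sw2_spec H' x y a b p' q' hxy hR'.off hab' hap' haq'
    hpb'.symm hqb'.symm hqp'.symm
  have e1 : p' = p := by
    have := (r5 p').2 (by simp)
    rw [← hG, q5] at this
    rcases this with h | h | h
    · exact absurd h hap'.ne.symm
    · exact absurd h r11
    · exact h
  have e2 : q' = q := by
    have := (r6 q').2 (by simp)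
    rw [← hG, q6] at this
    rcases this with h | h | h
    · exact absurd h haq'.ne.symm
    · exact absurd h r12
    · exact h
  subst e1 e2
  obtain rfl := tg_inj (tg_inj (tg_inj (tg_inj (tg_inj (tg_inj (tg_inj hG))))))
  rfl

theorem count2 : ∑ p ∈ (univ : Finset V).offDiag, (LS (AP p)).card ≤ (L2 (V := V)).card := by
  rw [← Finset.card_sigma]
  refine Finset.card_le_card_of_injOn f2 ?_ f2_inj
  rintro ⟨⟨x, y⟩, ⟨⟨⟨⟨⟨⟨H, a⟩, b⟩, p⟩, q⟩, w⟩, z⟩⟩ h1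
  simp only [mem_coe, mem_sigma, mem_offDiag, mem_univ, true_and, mem_LS, LP] at h1
  obtain ⟨hxy, hR, hab, ⟨hap, hpb⟩, ⟨haq, hqb, hqp⟩, ⟨hbw, hwa⟩, hbz, hza, hzw⟩ := h1
  obtain ⟨q1, q2, q3, q4, q5, q6, q7, q8, q9, q10, q11, q12⟩ :=
    sw2_spec H x y a b p q hxy hR.off hab hap haq hpb.symm hqb.symm hqp.symm
  simp only [f2, L2, mem_coe, mem_filter, mem_LS, LP]
  refine ⟨⟨reg_univ q1, ((q7 a).2 hab.symm).symm, ⟨q2, q9.symm⟩, ⟨q3, q10.symm, hxy.symm⟩,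
    ⟨(q7 w).2 hbw, hwa⟩, (q7 z).2 hbz, hza, hzw⟩, q4⟩

theorem count3 : ∑ p ∈ (univ : Finset V).offDiag, (LS (AP p) \ TS (AP p)).card ≤
    (L3 (V := V)).card := by
  rw [← Finset.card_sigma]
  refine Finset.card_le_card_of_injOn (sw7 ∘ f2) ?_ ?_
  swap
  · refine (sw7_inj.injOn (s := Set.univ)).comp (f2_inj.mono ?_) (Set.mapsTo_univ _ _)
    rintro ⟨p, t⟩ h
    simp only [mem_coe, mem_sigma, mem_sdiff] at h ⊢
    exact ⟨h.1, h.2.1⟩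
  rintro ⟨⟨x, y⟩, ⟨⟨⟨⟨⟨⟨H, a⟩, b⟩, p⟩, q⟩, w⟩, z⟩⟩ h1
  simp only [mem_coe, mem_sigma, mem_offDiag, mem_univ, true_and, mem_sdiff, TS, mem_filter,
    mem_LS, LP] at h1
  obtain ⟨hxy, ⟨hR, hab, ⟨hap, hpb⟩, ⟨haq, hqb, hqp⟩, ⟨hbw, hwa⟩, hbz, hza, hzw⟩, hn⟩ := h1
  have hwz : ¬ H.Adj w z := by tauto
  obtain ⟨q1, q2, q3, q4, q5, q6, q7, q8, q9, q10, q11, q12⟩ :=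
    sw2_spec H x y a b p q hxy hR.off hab hap haq hpb.symm hqb.symm hqp.symm
  have hx0 := dg_eq_zero hR.off.2.1
  have hy0 := dg_eq_zero hR.off.2.2
  have k1 : w ≠ x := by rintro rfl; exact hx0 _ hbw.symm
  have k2 : w ≠ y := by rintro rfl; exact hy0 _ hbw.symm
  have k3 : z ≠ x := by rintro rfl; exact hx0 _ hbz.symm
  have k4 : z ≠ y := by rintro rfl; exact hy0 _ hbz.symm
  simp only [Function.comp, sw7, f2, L3, mem_coe, mem_filter, mem_LS, LP]
  refine ⟨⟨reg_univ q1, ((q7 a).2 hab.symm), ⟨(q7 w).2 hbw, hwa⟩, ⟨(q7 z).2 hbz, hza, hzw⟩,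
    ⟨q2, q9.symm⟩, q3, q10.symm, hxy.symm⟩, ?_, q4⟩
  rw [q8 w z hwa hza k1 k3 k2 k4]
  exact hwz

theorem card_CS_ge {m : ℕ} {A : Finset V} (hA : A.card = m) :
    (CS (univ : Finset (Fin m))).card ≤ (CS A).card := by
  let e : Fin m ≃ A := (Fintype.equivFinOfCardEq (by simpa using hA)).symm
  let φ : Fin m ↪ V := e.toEmbedding.trans (Function.Embedding.subtype _)
  refine Finset.card_le_card_of_injOn (fun G => G.map φ) ?_ ?_
  · intro G hG
    simp only [mem_coe, mem_CS] at hG ⊢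
    refine ⟨fun v hv => ?_, fun v hv => ?_⟩
    · obtain ⟨i, hi⟩ := e.surjective ⟨v, hv⟩
      have hφ : φ i = v := by simp [φ, hi]
      subst hφ
      rw [← hG.1 i (mem_univ i)]
      unfold dg
      rw [← Set.ncard_image_of_injective (G.neighborSet i) φ.injective]
      congr 1
      ext t
      simp only [SimpleGraph.mem_neighborSet, SimpleGraph.map_adj, Set.mem_image]
      constructor
      · rintro ⟨u, w, h1, h2, h3⟩
        obtain rfl := φ.injective h2
        exact ⟨w, h1, h3⟩
      · rintro ⟨w, h1, h2⟩
        exact ⟨i, w, h1, rfl, h2⟩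
    · unfold dg
      rw [Set.ncard_eq_zero]
      ext t
      simp only [SimpleGraph.mem_neighborSet, SimpleGraph.map_adj, Set.mem_empty_iff_false,
        iff_false]
      rintro ⟨u, w, h1, h2, h3⟩
      apply hv
      rw [← h2]
      exact (e u).2
  · intro G _ G' _ h
    exact SimpleGraph.map_injective φ h

/-- number of cubic graphs on `n` labelled vertices -/
noncomputable def cn (n : ℕ) : ℕ := (CS (univ : Finset (Fin n))).card

theorem rec_pos (m : ℕ) :
    (m + 2) * (m + 1) * (cn m * (m * 3) * (m * 3 - 2)) ≤ cn (m + 2) * ((m + 2) * 12) := by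
  have h1 := card_LS (univ : Finset (Fin (m + 2)))
  have h2 := count1 (V := Fin (m + 2))
  have h3 := card_L123 (V := Fin (m + 2))
  have h4 : ∀ p ∈ (univ : Finset (Fin (m + 2))).offDiag,
      cn m * (m * 3) * (m * 3 - 2) ≤ (IS (AP p)).card := by
    intro p hp
    have hA : (AP p).card = m := by
      have := card_AP (p := p) (by simpa using hp)
      simpa using this
    refine le_trans ?_ (card_IS (AP p))
    rw [hA]
    gcongr
    exact card_CS_ge hA
  have h5 := Finset.card_nsmul_le_sum _ _ _ h4
  simp only [Finset.offDiag_card, Finset.card_univ, Fintype.card_fin, smul_eq_mul] at h5 h1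
  have h6 : (m + 2) * (m + 2) - (m + 2) = (m + 2) * (m + 1) := by
    rw [← Nat.mul_sub_one]; rfl
  rw [h6] at h5
  unfold cn at *
  omega

theorem rec_main (m : ℕ) (hm : 9 ≤ m) :
    ((m : ℝ) + 2) * (m + 1) * (cn m * (m * (9 * m + 18 - 54 / (m - 8)))) ≤
      cn (m + 2) * ((m + 2) * 12) := by
  have h1 := card_LS (univ : Finset (Fin (m + 2)))
  have h2 := count1 (V := Fin (m + 2))
  have h2' := count2 (V := Fin (m + 2))
  have h2'' := count3 (V := Fin (m + 2))
  have h3 := card_L123 (V := Fin (m + 2))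
  have hm' : (9 : ℝ) ≤ m := by exact_mod_cast hm
  have hfac : (0 : ℝ) ≤ m * (9 * m + 18 - 54 / (m - 8)) := by
    apply mul_nonneg (by positivity)
    have : 54 / ((m : ℝ) - 8) ≤ 54 := div_le_self (by norm_num) (by linarith)
    linarith
  have h4 : ∀ p ∈ (univ : Finset (Fin (m + 2))).offDiag,
      (cn m : ℝ) * (m * (9 * m + 18 - 54 / (m - 8))) ≤
        ((IS (AP p)).card : ℝ) + (LS (AP p)).card + (LS (AP p) \ TS (AP p)).card := by
    intro p hp
    have hA : (AP p).card = m := by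
      have := card_AP (p := p) (by simpa using hp)
      simpa using this
    have g0 : (cn m : ℝ) ≤ (CS (AP p)).card := by exact_mod_cast card_CS_ge hA
    have g1 := card_IS (AP p)
    have g2 := card_LS (AP p)
    have g3 := card_TS (AP p)
    have g4 := card_SS (AP p)
    have g5 := Finset.le_card_sdiff (TS (AP p)) (LS (AP p))
    rw [hA] at g1 g2 g4
    set h := (CS (AP p)).card with hh
    have g6 : (h : ℝ) * (m * 3) * (m * 3 - 2) ≤ (IS (AP p)).card := by
      have : ((m * 3 - 2 : ℕ) : ℝ) = (m : ℝ) * 3 - 2 := by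
        rw [Nat.cast_sub (by omega)]; push_cast; ring
      rw [← this]; exact_mod_cast g1
    have g7 : ((SS (AP p)).card : ℝ) * (m * 3 - 24) ≤ h * (m * 81) := by
      have : ((m * 3 - 24 : ℕ) : ℝ) = (m : ℝ) * 3 - 24 := by
        rw [Nat.cast_sub (by omega)]; push_cast; ring
      rw [← this]; exact_mod_cast g4
    have g8 : ((SS (AP p)).card : ℝ) ≤ h * m * 27 / (m - 8) := by
      rw [le_div_iff₀ (by linarith)]
      nlinarith
    have g9 : ((LS (AP p)).card : ℝ) ≤ (LS (AP p) \ TS (AP p)).card + (TS (AP p)).card := by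
      have : (LS (AP p)).card ≤ (LS (AP p) \ TS (AP p)).card + (TS (AP p)).card := by omega
      exact_mod_cast this
    have g10 : ((TS (AP p)).card : ℝ) ≤ (SS (AP p)).card * 2 := by exact_mod_cast g3
    have g11 : ((LS (AP p)).card : ℝ) = h * (m * 12) := by exact_mod_cast g2
    have g12 : (h : ℝ) * m * 27 / (m - 8) * 2 = h * (m * (54 / (m - 8))) := by ring
    calc (cn m : ℝ) * (m * (9 * m + 18 - 54 / (m - 8)))
        ≤ h * (m * (9 * m + 18 - 54 / (m - 8))) := by gcongr
      _ ≤ _ := by nlinarith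
  have h5 := Finset.card_nsmul_le_sum _ _ _ h4
  simp only [Finset.offDiag_card, Finset.card_univ, Fintype.card_fin, Finset.sum_add_distrib,
    nsmul_eq_mul] at h5 h1
  have h6 : (m + 2) * (m + 2) - (m + 2) = (m + 2) * (m + 1) := by
    rw [← Nat.mul_sub_one]; rfl
  rw [h6] at h5
  have h7 : (∑ p ∈ (univ : Finset (Fin (m + 2))).offDiag, (IS (AP p)).card) +
      (∑ p ∈ (univ : Finset (Fin (m + 2))).offDiag, (LS (AP p)).card) +
      (∑ p ∈ (univ : Finset (Fin (m + 2))).offDiag, (LS (AP p) \ TS (AP p)).card) ≤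
      cn (m + 2) * ((m + 2) * 12) := by
    unfold cn; omega
  have h8 : (∑ p ∈ (univ : Finset (Fin (m + 2))).offDiag, ((IS (AP p)).card : ℝ)) +
      (∑ p ∈ (univ : Finset (Fin (m + 2))).offDiag, ((LS (AP p)).card : ℝ)) +
      (∑ p ∈ (univ : Finset (Fin (m + 2))).offDiag, ((LS (AP p) \ TS (AP p)).card : ℝ)) ≤
      cn (m + 2) * ((m + 2) * 12) := by
    exact_mod_cast h7
  push_cast at h5
  linarith

end main

section lower

theorem reg_top : Reg univ (⊤ : SimpleGraph (Fin 4)) := by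
  refine reg_univ fun t => ?_
  unfold dg
  have : (⊤ : SimpleGraph (Fin 4)).neighborSet t =
      ((univ.erase t : Finset (Fin 4)) : Set (Fin 4)) := by
    ext s
    simp [eq_comm]
  rw [this, Set.ncard_coe_finset, Finset.card_erase_of_mem (mem_univ t)]
  simp

theorem cn_pos_of {n : ℕ} {G : SimpleGraph (Fin n)} (h : Reg univ G) : 0 < cn n := by
  rw [cn, Finset.card_pos]
  exact ⟨G, mem_CS.2 h⟩

theorem cn_four : 0 < cn 4 := cn_pos_of reg_top

theorem cn_pos (h : ℕ) (hh : 2 ≤ h) : 0 < cn (2 * h) := by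
  induction h, hh using Nat.le_induction with
  | base => exact cn_four
  | succ h hh ih =>
    have h1 := rec_pos (2 * h)
    have h2 : 0 < (2 * h + 2) * (2 * h + 1) * (cn (2 * h) * (2 * h * 3) * (2 * h * 3 - 2)) := by
      have : 0 < 2 * h * 3 - 2 := by omega
      positivity
    have h3 := h2.trans_le h1
    exact Nat.pos_of_mul_pos_right h3

/-- the main term -/
noncomputable def BB (h : ℕ) : ℝ := (3 / 2 : ℝ) ^ h * h.factorial * ((2 * h).factorial / (2 * h))

theorem BB_pos (h : ℕ) (hh : 1 ≤ h) : 0 < BB h := by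
  unfold BB; positivity

theorem BB_succ (h : ℕ) (hh : 1 ≤ h) :
    BB (h + 1) = (2 * h + 1) * (2 * h) * (3 / 2 * (h + 1)) * BB h := by
  have hh' : (0 : ℝ) < h := by exact_mod_cast hh
  unfold BB
  have : 2 * (h + 1) = 2 * h + 1 + 1 := by ring
  rw [this, Nat.factorial_succ, Nat.factorial_succ, Nat.factorial_succ]
  push_cast
  field_simp
  ring

theorem cn_lower : ∃ κ : ℝ, 0 < κ ∧ ∀ h : ℕ, 11 ≤ h → κ * BB h ≤ cn (2 * h) := by
  have hp := BB_pos 11 (by norm_num)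
  have hc : (0 : ℝ) < cn (2 * 11) := by exact_mod_cast cn_pos 11 (by norm_num)
  obtain ⟨κ, hκ, hbase⟩ : ∃ κ : ℝ, 0 < κ ∧ κ * BB 11 * (1 + 3 / ((11 : ℕ) : ℝ)) = cn (2 * 11) := by
    refine ⟨cn (2 * 11) / (BB 11 * (1 + 3 / ((11 : ℕ) : ℝ))), by positivity, ?_⟩
    have h2 : (1 + 3 / ((11 : ℕ) : ℝ)) ≠ 0 := by positivity
    have h3 := hp.ne'
    generalize (1 + 3 / ((11 : ℕ) : ℝ)) = X at *
    field_simp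
  have key : ∀ h : ℕ, 11 ≤ h → κ * BB h * (1 + 3 / h) ≤ cn (2 * h) := by
    intro h hh
    induction h, hh using Nat.le_induction with
    | base => exact hbase.le
    | succ h hh ih =>
      have h11 : (11 : ℝ) ≤ h := by exact_mod_cast hh
      have r := rec_main (2 * h) (by omega)
      have e : 2 * (h + 1) = 2 * h + 2 := by ring
      rw [e, BB_succ h (by omega)]
      push_cast at r ⊢
      have hB := BB_pos h (by omega)
      have h8 : (0 : ℝ) < 2 * h - 8 := by linarith
      have h4 : (h : ℝ) - 4 ≠ 0 := by
        have : (0 : ℝ) < h - 4 := by linarith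
        exact this.ne'
      have h8' := h8.ne'
      have h2h : (2 * (h : ℝ) - 8) = 2 * (h - 4) := by ring
      have r2 : (2 * (h : ℝ) + 1) * (2 * h) * (cn (2 * h)) * (3 / 2 * (h + 1) - 9 / 2 / (2 * h - 8)) ≤
          cn (2 * h + 2) := by
        have hpos : (0 : ℝ) < (2 * h + 2) * 12 := by positivity
        refine le_of_mul_le_mul_right ?_ hpos
        refine le_trans (le_of_eq ?_) r
        field_simp
        ring
      have f0 : 0 ≤ (3 / 2 * ((h : ℝ) + 1) - 9 / 2 / (2 * h - 8)) := by
        have : 9 / 2 / (2 * (h : ℝ) - 8) ≤ 9 / 2 := div_le_self (by norm_num) (by linarith)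
        linarith
      refine le_trans ?_ r2
      have e1 : (3 / 2 * ((h : ℝ) + 1)) * (1 + 3 / (h + 1)) ≤
          (1 + 3 / h) * (3 / 2 * (h + 1) - 9 / 2 / (2 * h - 8)) := by
        have : (1 + 3 / (h : ℝ)) * (3 / 2 * (h + 1) - 9 / 2 / (2 * h - 8)) -
          (3 / 2 * ((h : ℝ) + 1)) * (1 + 3 / (h + 1)) = (9 / 2) * (h - 11) / (h * (2 * h - 8)) := by
          rw [h2h]
          field_simp
          ring
        have h2 : 0 ≤ (9 / 2) * ((h : ℝ) - 11) / (h * (2 * h - 8)) := by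
          apply div_nonneg <;> nlinarith
        linarith
      calc κ * ((2 * (h : ℝ) + 1) * (2 * h) * (3 / 2 * (h + 1)) * BB h) * (1 + 3 / (h + 1))
          = (2 * (h : ℝ) + 1) * (2 * h) * (κ * BB h) * ((3 / 2 * (h + 1)) * (1 + 3 / (h + 1))) := by
            ring
        _ ≤ (2 * (h : ℝ) + 1) * (2 * h) * (κ * BB h) *
            ((1 + 3 / h) * (3 / 2 * (h + 1) - 9 / 2 / (2 * h - 8))) := by gcongr
        _ = (2 * (h : ℝ) + 1) * (2 * h) * (κ * BB h * (1 + 3 / h)) *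
            (3 / 2 * (h + 1) - 9 / 2 / (2 * h - 8)) := by ring
        _ ≤ _ := by gcongr
  refine ⟨κ, hκ, fun h hh => le_trans ?_ (key h hh)⟩
  have := BB_pos h (by omega)
  refine le_mul_of_one_le_right (by positivity) ?_
  have : 0 ≤ 3 / (h : ℝ) := by positivity
  linarith

end lower

section upper
open Classical

theorem autcount {W V Γ : Type*} [Fintype W] [Fintype V] [Fintype Γ] (T : SimpleGraph W)
    (σ : Γ → Equiv.Perm W) (hinj : Function.Injective σ)
    (haut : ∀ γ p q, T.Adj (σ γ p) (σ γ q) ↔ T.Adj p q) :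
    Nat.card {F : SimpleGraph V // ∃ e : W ≃ V, F = T.map e.toEmbedding} * Nat.card Γ ≤
      Nat.card (W ≃ V) := by
  rw [← Nat.card_prod]
  have hmap : ∀ (γ : Γ) (e : W ≃ V), T.map ((σ γ).trans e).toEmbedding = T.map e.toEmbedding := by
    intro γ e
    ext u v
    simp only [SimpleGraph.map_adj]
    constructor
    · rintro ⟨a, b, h, rfl, rfl⟩
      exact ⟨σ γ a, σ γ b, (haut γ a b).2 h, rfl, rfl⟩
    · rintro ⟨a, b, h, rfl, rfl⟩
      exact ⟨(σ γ).symm a, (σ γ).symm b, (haut γ _ _).1 (by simpa using h), by simp, by simp⟩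
  refine Nat.card_le_card_of_injective
    (fun p => ((σ p.2).trans (Classical.choose p.1.2) : W ≃ V)) ?_
  rintro ⟨F, γ⟩ ⟨F', γ'⟩ h
  simp only at h
  have hF : F = F' := by
    apply Subtype.ext
    rw [Classical.choose_spec F.2, Classical.choose_spec F'.2, ← hmap γ, h, hmap]
  subst hF
  refine Prod.ext rfl (hinj ?_)
  ext1 w
  have := congrArg (fun f => f w) h
  simpa using this

/-- disjoint cycles -/
def Tm (M k : ℕ) : SimpleGraph (Fin M × ZMod k) where
  Adj p q := p.1 = q.1 ∧ p ≠ q ∧ (q.2 = p.2 + 1 ∨ p.2 = q.2 + 1)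
  symm := ⟨fun _ _ h => ⟨h.1.symm, h.2.1.symm, h.2.2.symm⟩⟩
  loopless := ⟨fun _ h => h.2.1 rfl⟩

/-- dihedral maps -/
def dih {k : ℕ} (s : Bool) (r z : ZMod k) : ZMod k := r + (if s then z else -z)

theorem dih_inj {k : ℕ} (s : Bool) (r : ZMod k) : Function.Injective (dih s r) := by
  intro z z' h
  cases s <;> simpa [dih] using h

theorem two_ne {k : ℕ} (hk : 3 ≤ k) : (2 : ZMod k) ≠ 0 := by
  intro h
  have h2 : ((2 : ℕ) : ZMod k) = 0 := by exact_mod_cast h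
  rw [ZMod.natCast_eq_zero_iff] at h2
  have := Nat.le_of_dvd (by norm_num) h2
  omega

theorem dih_adj {k : ℕ} (s : Bool) (r z z' : ZMod k) :
    (dih s r z' = dih s r z + 1 ∨ dih s r z = dih s r z' + 1) ↔ (z' = z + 1 ∨ z = z' + 1) := by
  cases s
  · simp only [dih]
    constructor
    · rintro (h | h)
      · right; simp at h; linear_combination h
      · left; simp at h; linear_combination h
    · rintro (h | h)
      · right; simp; linear_combination h
      · left; simp; linear_combination h
  · simp only [dih, if_true, add_assoc, add_right_inj]

/-- wreath product acting -/
noncomputable def wr {M k : ℕ} [NeZero k] (γ : (Fin M → Bool × ZMod k) × Equiv.Perm (Fin M)) :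
    Equiv.Perm (Fin M × ZMod k) :=
  Equiv.ofBijective (fun p => (γ.2 p.1, dih (γ.1 p.1).1 (γ.1 p.1).2 p.2)) (by
    rw [← Finite.injective_iff_bijective]
    rintro ⟨c, z⟩ ⟨c', z'⟩ h
    simp only [Prod.mk.injEq, EmbeddingLike.apply_eq_iff_eq] at h
    obtain ⟨rfl, h⟩ := h
    rw [dih_inj _ _ h])

theorem wr_apply {M k : ℕ} [NeZero k] (γ : (Fin M → Bool × ZMod k) × Equiv.Perm (Fin M))
    (p : Fin M × ZMod k) : wr γ p = (γ.2 p.1, dih (γ.1 p.1).1 (γ.1 p.1).2 p.2) := rfl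

theorem wr_inj {M k : ℕ} [NeZero k] (hk : 3 ≤ k) :
    Function.Injective (wr (M := M) (k := k)) := by
  rintro ⟨γ, π⟩ ⟨γ', π'⟩ h
  have h0 : ∀ c z, wr (γ, π) (c, z) = wr (γ', π') (c, z) := fun c z => by rw [h]
  simp only [wr_apply, Prod.mk.injEq] at h0
  refine Prod.ext ?_ (Equiv.ext fun c => (h0 c 0).1)
  funext c
  have h1 := (h0 c 0).2
  have h2 := (h0 c 1).2
  rcases hg : γ c with ⟨s, r⟩
  rcases hg' : γ' c with ⟨s', r'⟩
  rw [hg, hg'] at h1 h2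
  have hr : r = r' := by simpa [dih] using h1
  subst hr
  have h3 := two_ne hk
  cases s <;> cases s'
  · exact hg.trans hg'.symm
  · simp [dih] at h2
    exact absurd (by linear_combination -h2) h3
  · simp [dih] at h2
    exact absurd (by linear_combination h2) h3
  · exact hg.trans hg'.symm

theorem card_factors (M k : ℕ) (hk : 3 ≤ k) (n : ℕ) (hn : M * k = n) :
    Nat.card {F : SimpleGraph (Fin n) // ∃ e : (Fin M × ZMod k) ≃ Fin n, F = (Tm M k).map e.toEmbedding} *
      ((2 * k) ^ M * M.factorial) ≤ n.factorial := by
  have : NeZero k := ⟨by omega⟩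
  have h := autcount (V := Fin n) (Tm M k) (wr (M := M) (k := k)) (wr_inj hk) (by
    rintro ⟨γ, π⟩ ⟨c, z⟩ ⟨c', z'⟩
    simp only [wr_apply, Tm]
    by_cases hc : c = c'
    · subst hc
      simp only [dih_adj, true_and, ne_eq, Prod.mk.injEq, (dih_inj _ _).eq_iff]
    · simp [hc])
  have e0 : Fintype.card (Fin M × ZMod k) = n := by simp [ZMod.card, hn]
  have e1 : Nat.card ((Fin M × ZMod k) ≃ Fin n) = n.factorial := by
    rw [Nat.card_eq_fintype_card, Fintype.card_equiv (Fintype.equivFinOfCardEq e0), e0]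
  have e2 : Nat.card ((Fin M → Bool × ZMod k) × Equiv.Perm (Fin M)) =
      (2 * k) ^ M * M.factorial := by
    simp [Nat.card_eq_fintype_card, ZMod.card, Fintype.card_perm]
  rw [e1, e2] at h
  exact h

theorem card_matchings (h : ℕ) :
    Nat.card {G : SimpleGraph (Fin (2 * h)) // ∀ v, dg G v = 1} * (2 ^ h * h.factorial) ≤
      (2 * h).factorial := by
  have hex : ∀ G : {G : SimpleGraph (Fin (2 * h)) // ∀ v, dg G v = 1}, ∃ s : Fin (2 * h) → Fin (2 * h),
      ∀ v w, G.1.Adj v w ↔ w = s v := by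
    rintro ⟨G, hG⟩
    have : ∀ v, ∃ a, G.neighborSet v = {a} := fun v => Set.ncard_eq_one.1 (hG v)
    choose s hs using this
    refine ⟨s, fun v w => ?_⟩
    rw [← SimpleGraph.mem_neighborSet, hs]
    simp
  choose s hs using hex
  have hinv : ∀ G v, s G (s G v) = v := fun G v =>
    ((hs G _ _).1 ((hs G v _).2 rfl).symm).symm
  let τ : {G : SimpleGraph (Fin (2 * h)) // ∀ v, dg G v = 1} → Equiv.Perm (Fin (2 * h)) :=
    fun G => ⟨s G, s G, hinv G, hinv G⟩
  have hτ : Function.Injective τ := by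
    intro G G' hGG
    apply Subtype.ext
    ext v w
    rw [hs, hs]
    have : s G v = s G' v := congrArg (fun f => f v) hGG
    rw [this]
  have hct : ∀ G, (τ G).cycleType = Multiset.replicate h 2 := by
    intro G
    have : Fact (Nat.Prime 2) := ⟨Nat.prime_two⟩
    have h2 : (τ G) ^ 2 = 1 := by
      ext v
      simp [pow_two, τ, hinv]
    have h3 := Equiv.Perm.cycleType_of_pow_prime_eq_one h2
    have h4 := Equiv.Perm.sum_cycleType (τ G)
    have h5 : (τ G).support = univ := by
      ext v
      simp only [Equiv.Perm.mem_support, mem_univ, iff_true]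
      intro hv
      have : G.1.Adj v v := (hs G v v).2 hv.symm
      exact this.ne rfl
    rw [h5, h3] at h4
    simp at h4
    have h6 : (τ G).cycleType.card = h := by omega
    exact h3.trans (by rw [h6])
  have hle : Nat.card {G : SimpleGraph (Fin (2 * h)) // ∀ v, dg G v = 1} ≤
      (univ.filter (fun g : Equiv.Perm (Fin (2 * h)) => g.cycleType = Multiset.replicate h 2)).card := by
    rw [Nat.card_eq_fintype_card, ← Finset.card_univ]
    exact Finset.card_le_card_of_injOn τ (fun G _ => by simp [hct]) (hτ.injOn)
  have hc := Equiv.Perm.card_of_cycleType_mul_eq (α := Fin (2 * h)) (Multiset.replicate h 2)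
  have hprod : (∏ n ∈ (Multiset.replicate h 2).toFinset, ((Multiset.replicate h 2).count n).factorial)
      = h.factorial := by
    rcases Nat.eq_zero_or_pos h with rfl | hp
    · simp
    · rw [Multiset.toFinset_replicate, if_neg hp.ne']
      simp
  rw [hprod] at hc
  have hif : ((Multiset.replicate h 2).sum ≤ Fintype.card (Fin (2 * h)) ∧
      ∀ a ∈ Multiset.replicate h 2, 2 ≤ a) := by
    refine ⟨by simp [mul_comm], fun a ha => ?_⟩
    rw [Multiset.eq_of_mem_replicate ha]
  rw [if_pos hif] at hc
  simp only [Multiset.sum_replicate, Fintype.card_fin, smul_eq_mul, Multiset.prod_replicate,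
    mul_comm h 2, Nat.sub_self, Nat.factorial_zero, one_mul] at hc
  refine (Nat.mul_le_mul_right _ hle).trans ?_
  refine le_trans (le_of_eq ?_) hc.le
  congr!
end upper

section ana

theorem cb_bound (h : ℕ) : (3 * h + 1) * h.centralBinom ^ 2 ≤ 16 ^ h := by
  induction h with
  | zero => simp
  | succ h ih =>
    have h1 := Nat.succ_mul_centralBinom_succ h
    have h2 : ((h + 1) ^ 2 * (3 * h + 1)) * ((3 * (h + 1) + 1) * (h + 1).centralBinom ^ 2) ≤
        ((h + 1) ^ 2 * (3 * h + 1)) * 16 ^ (h + 1) := by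
      calc ((h + 1) ^ 2 * (3 * h + 1)) * ((3 * (h + 1) + 1) * (h + 1).centralBinom ^ 2)
          = (3 * h + 1) * (3 * h + 4) * ((h + 1) * (h + 1).centralBinom) ^ 2 := by ring
        _ = ((3 * h + 4) * (2 * (2 * h + 1)) ^ 2) * ((3 * h + 1) * h.centralBinom ^ 2) := by
            rw [h1]; ring
        _ ≤ ((3 * h + 4) * (2 * (2 * h + 1)) ^ 2) * 16 ^ h := Nat.mul_le_mul_left _ ih
        _ ≤ (16 * ((h + 1) ^ 2 * (3 * h + 1))) * 16 ^ h := by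
            apply Nat.mul_le_mul_right; nlinarith
        _ = _ := by ring
    exact Nat.le_of_mul_le_mul_left h2 (by positivity)

theorem cb_bound_real (h : ℕ) : √(h : ℝ) * h.centralBinom ≤ 4 ^ h := by
  have h1 : (h : ℝ) * (h.centralBinom : ℝ) ^ 2 ≤ 16 ^ h := by
    have := cb_bound h
    have h2 : h * h.centralBinom ^ 2 ≤ 16 ^ h :=
      (Nat.mul_le_mul_right _ (by omega)).trans this
    exact_mod_cast h2
  refine le_of_sq_le_sq ?_ (by positivity)
  rw [mul_pow, Real.sq_sqrt (by positivity), ← pow_mul, mul_comm h 2, pow_mul]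
  norm_num
  exact h1

theorem fact_lower (M : ℕ) : √(M : ℝ) * (M / Real.exp 1) ^ M ≤ M.factorial := by
  refine le_trans ?_ (Stirling.le_factorial_stirling M)
  have := Real.pi_gt_three
  gcongr
  nlinarith [(Nat.cast_nonneg M : (0 : ℝ) ≤ M)]

theorem key_ineq (h k M : ℕ) (hh : 1 ≤ h) (hM : M * k = 2 * h) :
    (h.centralBinom : ℝ) * (2 * h) ≤
      (√(2 * k : ℝ) * (4 / 3) ^ h * (Real.exp 1 / (2 * (2 * h))) ^ M) * 3 ^ h *
        ((2 * k) ^ M * M.factorial) := by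
  have hhr : (0 : ℝ) < h := by exact_mod_cast hh
  have hMr : (M : ℝ) * k = 2 * h := by exact_mod_cast hM
  have e := Real.exp_pos 1
  have h1 : (h.centralBinom : ℝ) * (2 * h) ≤ 2 * √(h : ℝ) * 4 ^ h := by
    calc (h.centralBinom : ℝ) * (2 * h) = 2 * √(h : ℝ) * (√(h : ℝ) * h.centralBinom) := by
          linear_combination (-2 * (h.centralBinom : ℝ)) * Real.mul_self_sqrt hhr.le
      _ ≤ _ := by
          have := cb_bound_real h
          gcongr
  have h2 : √(2 * k : ℝ) * √(M : ℝ) = 2 * √(h : ℝ) := by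
    rw [← Real.sqrt_mul (by positivity)]
    have : (2 * k : ℝ) * M = 2 ^ 2 * h := by linear_combination 2 * hMr
    rw [this, Real.sqrt_mul (by positivity), Real.sqrt_sq (by norm_num)]
  refine h1.trans ?_
  calc 2 * √(h : ℝ) * 4 ^ h
      = (√(2 * k : ℝ) * (4 / 3) ^ h * (Real.exp 1 / (2 * (2 * h))) ^ M) * 3 ^ h *
        ((2 * k) ^ M * (√(M : ℝ) * (M / Real.exp 1) ^ M)) := by
        have h3 : (4 : ℝ) ^ h = (4 / 3) ^ h * 3 ^ h := by rw [← mul_pow]; norm_num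
        have h4 : (Real.exp 1 / (2 * (2 * h))) ^ M * ((2 * k : ℝ) ^ M * (M / Real.exp 1) ^ M) = 1 := by
          rw [← mul_pow, ← mul_pow]
          have : Real.exp 1 / (2 * (2 * h)) * (2 * k * (M / Real.exp 1)) = 1 := by
            field_simp
            linear_combination hMr
          rw [this, one_pow]
        rw [← h2, h3]
        linear_combination (-(√(2 * k : ℝ) * √(M : ℝ) * (4 / 3) ^ h * 3 ^ h)) * h4
    _ ≤ _ := by
        have := fact_lower M
        gcongr

theorem ratio_bound (h k M A B C D : ℕ) (κ : ℝ) (hκ : 0 < κ) (hh : 1 ≤ h) (hk : 1 ≤ k)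
    (hM : M * k = 2 * h)
    (hA : A * ((2 * k) ^ M * M.factorial) ≤ (2 * h).factorial)
    (hB : B * (2 ^ h * h.factorial) ≤ (2 * h).factorial)
    (hC : κ * BB h ≤ C) (hD : D ≤ A * B) :
    (D : ℝ) / C ≤ κ⁻¹ * (√(2 * k : ℝ) * (4 / 3) ^ h * (Real.exp 1 / (2 * (2 * h))) ^ M) := by
  have hhr : (0 : ℝ) < h := by exact_mod_cast hh
  have hkr : (0 : ℝ) < k := by exact_mod_cast hk
  have hBB := BB_pos h hh
  have hCpos : (0 : ℝ) < C := lt_of_lt_of_le (by positivity) hC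
  set X : ℝ := √(2 * k : ℝ) * (4 / 3) ^ h * (Real.exp 1 / (2 * (2 * h))) ^ M with hX
  have hXpos : 0 < X := by positivity
  have hkey := key_ineq h k M hh hM
  rw [← hX] at hkey
  have hA' : (A : ℝ) * ((2 * k) ^ M * M.factorial) ≤ (2 * h).factorial := by exact_mod_cast hA
  have hB' : (B : ℝ) * (2 ^ h * h.factorial) ≤ (2 * h).factorial := by exact_mod_cast hB
  have hD' : (D : ℝ) ≤ A * B := by exact_mod_cast hD
  have hcb : ((2 * h).factorial : ℝ) = h.centralBinom * h.factorial * h.factorial := by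
    have := Nat.choose_mul_factorial_mul_factorial (n := 2 * h) (k := h) (by omega)
    rw [show 2 * h - h = h by omega] at this
    rw [Nat.centralBinom]
    exact_mod_cast this.symm
  set P : ℝ := (2 * k) ^ M * M.factorial with hP
  have hPpos : 0 < P := by positivity
  set f : ℝ := (h.factorial : ℝ) with hf
  have hfpos : 0 < f := by rw [hf]; positivity
  set Q : ℝ := 2 ^ h * f with hQ
  have hQpos : 0 < Q := by positivity
  have hmain : (A : ℝ) * B ≤ X * BB h := by
    have h1 : ((A : ℝ) * B) * (P * Q) ≤ ((2 * h).factorial : ℝ) * (2 * h).factorial := by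
      calc ((A : ℝ) * B) * (P * Q) = (A * P) * (B * Q) := by ring
        _ ≤ _ := by gcongr
    have h2 : ((2 * h).factorial : ℝ) * (2 * h).factorial ≤ (X * BB h) * (P * Q) := by
      have e1 : (X * BB h) * (P * Q) =
          (X * 3 ^ h * P) * (f * f * ((2 * h).factorial / (2 * h))) := by
        have h3 : (3 : ℝ) ^ h = (3 / 2) ^ h * 2 ^ h := by rw [← mul_pow]; norm_num
        rw [BB, hQ, h3]; ring
      have e2 : ((2 * h).factorial : ℝ) * (2 * h).factorial =
          (h.centralBinom * (2 * h)) * (f * f * ((2 * h).factorial / (2 * h))) := by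
        nth_rewrite 1 [hcb]
        field_simp
      rw [e1, e2]
      gcongr
    exact le_of_mul_le_mul_right (h1.trans h2) (by positivity)
  rw [div_le_iff₀ hCpos]
  calc (D : ℝ) ≤ X * BB h := hD'.trans hmain
    _ = κ⁻¹ * X * (κ * BB h) := by field_simp
    _ ≤ _ := by gcongr

end ana

section fac

theorem Tm_nbr {M k : ℕ} (hk : 3 ≤ k) (p : Fin M × ZMod k) :
    (Tm M k).neighborSet p = {(p.1, p.2 + 1), (p.1, p.2 - 1)} := by
  have h2 := two_ne hk
  have h1 : (1 : ZMod k) ≠ 0 := by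
    intro h
    exact h2 (by linear_combination 2 * h)
  obtain ⟨c, z⟩ := p
  ext ⟨c', z'⟩
  simp only [SimpleGraph.mem_neighborSet, Tm, Set.mem_insert_iff, Set.mem_singleton_iff,
    Prod.mk.injEq, ne_eq]
  constructor
  · rintro ⟨rfl, -, h | h⟩
    · exact Or.inl ⟨rfl, h⟩
    · exact Or.inr ⟨rfl, by linear_combination -h⟩
  · rintro (⟨rfl, rfl⟩ | ⟨rfl, rfl⟩)
    · exact ⟨rfl, by simpa using h1, Or.inl rfl⟩
    · refine ⟨rfl, fun h => h1 ?_, Or.inr (by ring)⟩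
      linear_combination h.2

theorem dg_F {M k n : ℕ} (hk : 3 ≤ k) (e : (Fin M × ZMod k) ≃ Fin n) (v : Fin n) :
    dg ((Tm M k).map e.toEmbedding) v = 2 := by
  obtain ⟨p, rfl⟩ := e.surjective v
  have h2 := two_ne hk
  unfold dg
  have h3 : ((Tm M k).map e.toEmbedding).neighborSet (e p) = e '' (Tm M k).neighborSet p := by
    ext w
    obtain ⟨q, rfl⟩ := e.surjective w
    rw [SimpleGraph.mem_neighborSet, e.injective.mem_set_image, SimpleGraph.mem_neighborSet]
    exact SimpleGraph.map_adj_apply (f := e.toEmbedding)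
  rw [h3, Set.ncard_image_of_injective _ e.injective, Tm_nbr hk, Set.ncard_pair]
  intro h
  rw [Prod.mk.injEq] at h
  exact h2 (by linear_combination h.2)

theorem exists_F {n k : ℕ} (hk : 3 ≤ k) (G : SimpleGraph (Fin n)) (hG : HasCycleFactor G k) :
    ∃ e : (Fin (n / k) × ZMod k) ≃ Fin n, (Tm (n / k) k).map e.toEmbedding ≤ G := by
  have : NeZero k := ⟨by omega⟩
  have : Fact (1 < k) := ⟨by omega⟩
  obtain ⟨f, hf, hadj⟩ := hG
  have hbij : Function.Bijective (fun p : Fin (n / k) × ZMod k => f p.1 ⟨p.2.val, p.2.val_lt⟩) := by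
    constructor
    · rintro ⟨c, z⟩ ⟨c', z'⟩ h
      have h1 := hf.1 (a₁ := (c, ⟨z.val, z.val_lt⟩)) (a₂ := (c', ⟨z'.val, z'.val_lt⟩)) h
      simp only [Prod.mk.injEq, Fin.mk.injEq] at h1
      rw [h1.1, ZMod.val_injective k h1.2]
    · intro v
      obtain ⟨⟨c, i⟩, h⟩ := hf.2 v
      refine ⟨(c, ((i : ℕ) : ZMod k)), ?_⟩
      rw [← h]
      simp only
      congr 1
      ext
      simp [ZMod.val_natCast, Nat.mod_eq_of_lt i.2]
  have hadj' : ∀ c (z : ZMod k), G.Adj (f c ⟨z.val, z.val_lt⟩) (f c ⟨(z + 1).val, (z + 1).val_lt⟩) := by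
    intro c z
    have := hadj c ⟨z.val, z.val_lt⟩
    convert this using 3
    rw [ZMod.val_add, ZMod.val_one]
  refine ⟨Equiv.ofBijective _ hbij, ?_⟩
  rw [SimpleGraph.map_le_iff_le_comap]
  rintro ⟨c, z⟩ ⟨c', z'⟩ ⟨h1, -, h3⟩
  simp only at h1 h3
  subst h1
  simp only [SimpleGraph.comap_adj, Equiv.coe_toEmbedding, Equiv.ofBijective_apply]
  rcases h3 with rfl | rfl
  · exact hadj' _ _
  · exact (hadj' _ _).symm

theorem dg_sdiff {n : ℕ} {F G : SimpleGraph (Fin n)} (h : F ≤ G) (v : Fin n) :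
    dg (G \ F) v = dg G v - dg F v := by
  unfold dg
  rw [← Set.ncard_sdiff]
  · rfl
  · exact fun w hw => h hw

theorem count_le {n k : ℕ} (hk : 3 ≤ k) :
    Nat.card {G : SimpleGraph (Fin n) // IsCubic G ∧ HasCycleFactor G k} ≤
    Nat.card {F : SimpleGraph (Fin n) // ∃ e : (Fin (n / k) × ZMod k) ≃ Fin n,
      F = (Tm (n / k) k).map e.toEmbedding} *
    Nat.card {G : SimpleGraph (Fin n) // ∀ v, dg G v = 1} := by
  rw [← Nat.card_prod]
  choose e he using fun G : {G : SimpleGraph (Fin n) // IsCubic G ∧ HasCycleFactor G k} =>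
    exists_F hk G.1 G.2.2
  refine Nat.card_le_card_of_injective (fun G => (⟨(Tm (n / k) k).map (e G).toEmbedding, e G, rfl⟩,
    ⟨G.1 \ (Tm (n / k) k).map (e G).toEmbedding, fun v => ?_⟩)) ?_
  · rw [dg_sdiff (he G), dg_F hk]
    have : dg G.1 v = 3 := G.2.1 v
    rw [this]
  · intro G G' h
    simp only [Prod.mk.injEq, Subtype.mk.injEq] at h
    apply Subtype.ext
    rw [← sup_sdiff_cancel_right (he G), ← sup_sdiff_cancel_right (he G'), h.2, h.1]

theorem card_cubic (n : ℕ) : Nat.card {G : SimpleGraph (Fin n) // IsCubic G} = cn n := by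
  rw [cn, ← Nat.card_eq_finsetCard]
  refine Nat.card_congr (Equiv.subtypeEquivRight fun G => ?_)
  rw [mem_CS]
  exact ⟨fun h => reg_univ h, fun h v => h.1 v (mem_univ v)⟩

end fac

section fin
open Filter Topology

/-- rate -/
noncomputable def lam : ℝ := Real.log 2 - Real.log 3 / 2

theorem lam_pos : 0 < lam := by
  have h : Real.log 3 < Real.log (2 ^ 2) := Real.log_lt_log (by norm_num) (by norm_num)
  rw [Real.log_pow] at h
  unfold lam
  push_cast at h
  linarith

theorem K0_eq (n : ℕ) (hn : 0 < n) : K0 n = (Real.log 2 + Real.log n - 1) / lam := by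
  have h2 : 0 < Real.log 2 := Real.log_pos (by norm_num)
  have hnr : (0 : ℝ) < n := by exact_mod_cast hn
  have hl := lam_pos
  have h1 : Real.log (2 * n / Real.exp 1) = Real.log 2 + Real.log n - 1 := by
    rw [Real.log_div (by positivity) (Real.exp_pos 1).ne', Real.log_mul (by norm_num) hnr.ne',
      Real.log_exp]
  have h3 : 1 - Real.logb 2 3 / 2 = lam / Real.log 2 := by
    unfold lam Real.logb; field_simp
  rw [K0, h3, Real.logb, h1]
  field_simp

theorem exp_part (h k M : ℕ) (hh : 1 ≤ h) (hk : 3 ≤ k) (hM : M * k = 2 * h)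
    (hK : (k : ℝ) ≤ K0 (2 * h) - (Real.log (2 * h : ℕ)) ^ 2 / (2 * h : ℕ)) :
    √(2 * k : ℝ) * (4 / 3) ^ h * (Real.exp 1 / (2 * (2 * h))) ^ M ≤
      √(2 / lam * Real.log (2 * h : ℕ)) * Real.exp (- lam ^ 2 * Real.log (2 * h : ℕ)) := by
  have hl := lam_pos
  have hhr : (0 : ℝ) < h := by exact_mod_cast hh
  have hkr : (0 : ℝ) < k := by exact_mod_cast (by omega : 0 < k)
  have hMr : (M : ℝ) * k = 2 * h := by exact_mod_cast hM
  have hMpos : (0 : ℝ) < M := by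
    have : M ≠ 0 := by rintro rfl; omega
    exact_mod_cast Nat.pos_of_ne_zero this
  rw [K0_eq _ (by omega)] at hK
  have hcast : ((2 * h : ℕ) : ℝ) = 2 * h := by push_cast; ring
  have hLpos : 0 < Real.log ((2 * h : ℕ) : ℝ) := by
    apply Real.log_pos
    exact_mod_cast (by omega : 1 < 2 * h)
  set ℓ := Real.log ((2 * h : ℕ) : ℝ) with hℓ
  have hlog2 : Real.log 2 < 1 := by
    have := Real.log_two_lt_d9; linarith
  have hkl : k * lam ≤ Real.log 2 + ℓ - 1 - lam * (ℓ ^ 2 / (2 * h)) := by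
    rw [hcast] at hK
    calc k * lam ≤ ((Real.log 2 + ℓ - 1) / lam - ℓ ^ 2 / (2 * h)) * lam := by gcongr
      _ = _ := by field_simp
  have hk1 : k * lam ≤ ℓ := by
    have : 0 ≤ lam * (ℓ ^ 2 / (2 * h)) := by positivity
    linarith
  have hsq : √(2 * k : ℝ) ≤ √(2 / lam * ℓ) := by
    apply Real.sqrt_le_sqrt
    rw [div_mul_eq_mul_div, le_div_iff₀ hl]
    nlinarith
  have e1 : ((4 / 3 : ℝ)) ^ h = Real.exp (2 * h * lam) := by
    rw [← Real.exp_log (by norm_num : (0 : ℝ) < 4 / 3), ← Real.exp_nat_mul]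
    congr 1
    rw [Real.log_div (by norm_num) (by norm_num), show (4 : ℝ) = 2 ^ 2 by norm_num, Real.log_pow,
      lam]
    push_cast; ring
  have e2 : (Real.exp 1 / (2 * (2 * h))) ^ M = Real.exp (- (M * (Real.log 2 + ℓ - 1))) := by
    rw [← Real.exp_log (by positivity : (0 : ℝ) < Real.exp 1 / (2 * (2 * h))), ← Real.exp_nat_mul]
    congr 1
    rw [Real.log_div (Real.exp_pos 1).ne' (by positivity), Real.log_mul (by norm_num) (by positivity),
      Real.log_exp, hℓ, hcast]
    ring
  rw [mul_assoc, e1, e2, ← Real.exp_add]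
  gcongr
  have h5 : M * (k * lam) ≤ M * (Real.log 2 + ℓ - 1 - lam * (ℓ ^ 2 / (2 * h))) := by gcongr
  have h6 : lam ^ 2 * ℓ ≤ M * (lam * (ℓ ^ 2 / (2 * h))) := by
    rw [← hMr]
    have : M * (lam * (ℓ ^ 2 / (M * k))) = lam * ℓ ^ 2 / k := by field_simp
    rw [this, le_div_iff₀ hkr]
    calc lam ^ 2 * ℓ * k = lam * ℓ * (k * lam) := by ring
      _ ≤ lam * ℓ * ℓ := by gcongr
      _ = _ := by ring
  have h7 : M * (k * lam) = 2 * h * lam := by rw [← hMr]; ring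
  linarith

theorem lim_part (c κ : ℝ) : Tendsto (fun n : ℕ => κ *
    (√(c * Real.log n) * Real.exp (- lam ^ 2 * Real.log n))) atTop (𝓝 0) := by
  have hl := lam_pos
  have h0 : Tendsto (fun x : ℝ => x ^ (1 / 2 : ℝ) * Real.exp (- lam ^ 2 * x)) atTop (𝓝 0) :=
    tendsto_rpow_mul_exp_neg_mul_atTop_nhds_zero _ _ (by positivity)
  have h1 : Tendsto (fun x : ℝ => (κ * √c) * (x ^ (1 / 2 : ℝ) * Real.exp (- lam ^ 2 * x)))
      atTop (𝓝 0) := by simpa using h0.const_mul (κ * √c)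
  have h2 := h1.comp (Real.tendsto_log_atTop.comp (tendsto_natCast_atTop_atTop (R := ℝ)))
  refine h2.congr fun n => ?_
  have h3 : 0 ≤ Real.log n := Real.log_natCast_nonneg n
  simp only [Function.comp]
  rw [Real.sqrt_mul' _ h3, ← Real.sqrt_eq_rpow]
  ring

end fin
end CF

/-- If `n` ranges over even positive integers tending to infinity and `k(n)` is a divisor
of `n` with `3 ≤ k(n) ≤ K₀(n) − (log n)²/n`, then the proportion of 3-regular simple graphs
on `{1,…,n}` containing a `k(n)`-cycle factor tends to `0`. -/
theorem stmt1 (N k : ℕ → ℕ)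
    (hNeven : ∀ i, Even (N i)) (hNpos : ∀ i, 0 < N i)
    (hN : Filter.Tendsto N Filter.atTop Filter.atTop)
    (hdvd : ∀ i, k i ∣ N i) (hk3 : ∀ i, 3 ≤ k i)
    (hK : ∀ i, (k i : ℝ) ≤ K0 (N i) - (Real.log (N i)) ^ 2 / N i) :
    Filter.Tendsto (fun i =>
      (Nat.card {G : SimpleGraph (Fin (N i)) // IsCubic G ∧ HasCycleFactor G (k i)} : ℝ) /
        (Nat.card {G : SimpleGraph (Fin (N i)) // IsCubic G} : ℝ))
      Filter.atTop (nhds 0) := by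
  obtain ⟨κ, hκ, hlow⟩ := CF.cn_lower
  refine squeeze_zero' (Filter.Eventually.of_forall fun i => by positivity) ?_
    ((CF.lim_part (2 / CF.lam) κ⁻¹).comp hN)
  filter_upwards [hN.eventually_ge_atTop 22] with i hi
  simp only [Function.comp]
  obtain ⟨h, hh⟩ := hNeven i
  have hd := hdvd i
  have h3 := hk3 i
  have hKi := hK i
  generalize k i = k at *
  generalize N i = n at *
  obtain rfl : n = 2 * h := by omega
  have hM : 2 * h / k * k = 2 * h := Nat.div_mul_cancel hd
  rw [CF.card_cubic]
  refine (CF.ratio_bound h k (2 * h / k) _ _ _ _ κ hκ (by omega) (by omega) hM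
    (CF.card_factors (2 * h / k) k h3 (2 * h) hM) (CF.card_matchings h)
    (hlow h (by omega)) (CF.count_le h3)).trans ?_
  have := CF.exp_part h k (2 * h / k) (by omega) h3 hM hKi
  gcongr
end

section
/- Let I_{0,m} denote the set of simple graphs on {1,…,n} having exactly m connected components, each a path on at least 2 vertices, and let S be chosen uniformly at random from I_{0,m}. Let t, ℓ be integers with 1 ≤ t ≤ m−1, ℓ ≥ 2, 2m ≤ n and t(ℓ−2) ≤ n−m−1. Then the probability that at least t components of S have at least ℓ vertices is at most (1 + t/(m−t)) · (1/t!) · (m−1)_t · (n−2m)_{t(ℓ−2)} / (n−m−1)_{t(ℓ−2)}, where (x)_j = x(x−1)⋯(x−j+1) denotes the falling factorial. -/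
/-- The connected component `c` of `G` is a path on at least 2 vertices. -/
def IsPathComponent {V : Type*} (G : SimpleGraph V) (c : G.ConnectedComponent) : Prop :=
  ∃ (ℓ : ℕ) (v : Fin ℓ → V), 2 ≤ ℓ ∧ Function.Injective v ∧ Set.range v = c.supp ∧
    ∀ a b : Fin ℓ, G.Adj (v a) (v b) ↔ ((a : ℕ) + 1 = b ∨ (b : ℕ) + 1 = a)

/-- `G` has exactly `m` connected components, each of which is a path on at least 2
vertices (i.e. `G ∈ I_{0,m}`). -/
def PathsGraph {n : ℕ} (G : SimpleGraph (Fin n)) (m : ℕ) : Prop :=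
  Nat.card G.ConnectedComponent = m ∧ ∀ c : G.ConnectedComponent, IsPathComponent G c

open Finset in
lemma card_piAntidiag_fin (m n : ℕ) :
    (piAntidiag (univ : Finset (Fin m)) n).card = m.multichoose n := by
  rw [← map_sym_eq_piAntidiag, card_map, Finset.sym_univ, Finset.card_univ, Sym.card_sym_eq_multichoose,
    Fintype.card_fin]

open Finset in
lemma card_lower (m n : ℕ) (g : Fin m → ℕ) (h : ∑ i, g i ≤ n) :
    ((piAntidiag (univ : Finset (Fin m)) n).filter (fun f => ∀ i, g i ≤ f i)).card
      = m.multichoose (n - ∑ i, g i) := by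
  rw [← card_piAntidiag_fin]
  symm
  refine Finset.card_bij (fun f _ => fun i => f i + g i) ?_ ?_ ?_
  · intro f hf
    simp only [mem_piAntidiag, mem_filter, mem_univ, implies_true, and_true] at hf ⊢
    refine ⟨?_, fun i => by omega⟩
    have hf1 : ∑ i, f i = n - ∑ i, g i := hf
    rw [sum_add_distrib]; omega
  · intro f _ f' _ hff
    funext i
    have := congrFun hff i
    simpa using this
  · intro f hf
    simp only [mem_piAntidiag, mem_filter, mem_univ, implies_true, and_true] at hf ⊢
    refine ⟨fun i => f i - g i, ?_, ?_⟩
    · have : ∑ i, (f i - g i) + ∑ i, g i = ∑ i, f i := by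
        rw [← sum_add_distrib]
        exact sum_congr rfl (fun i _ => Nat.sub_add_cancel (hf.2 i))
      have hf1 : ∑ i, f i = n := hf.1
      change ∑ i, (f i - g i) = _
      omega
    · funext i
      exact Nat.sub_add_cancel (hf.2 i)

open Finset in
/-- compositions of `n` in `m` parts, each at least `2` -/
def comps (m n : ℕ) : Finset (Fin m → ℕ) :=
  (piAntidiag (univ : Finset (Fin m)) n).filter (fun f => ∀ i, 2 ≤ f i)

open Finset in
lemma card_comps (m n : ℕ) (h : 2 * m ≤ n) (hm : 1 ≤ m) :
    (comps m n).card = (n - m - 1).choose (n - 2 * m) := by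
  have := card_lower m n (fun _ => 2) (by simp; omega)
  unfold comps
  rw [this, Nat.multichoose_eq]
  simp
  congr 1 <;> omega

open Finset in
lemma card_comps_T (m n ℓ : ℕ) (hℓ : 2 ≤ ℓ) (h : 2 * m ≤ n) (hm : 1 ≤ m) (T : Finset (Fin m)) :
    ((comps m n).filter (fun f => ∀ i ∈ T, ℓ ≤ f i)).card * (n - m - 1).descFactorial (T.card * (ℓ - 2))
      = (comps m n).card * (n - 2 * m).descFactorial (T.card * (ℓ - 2)) := by
  set k := T.card * (ℓ - 2) with hk
  have hsum : ∑ i : Fin m, (2 + if i ∈ T then (ℓ - 2) else 0) = 2 * m + k := by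
    rw [sum_add_distrib, sum_ite_mem]
    simp [hk, mul_comm]
  have heq : (comps m n).filter (fun f => ∀ i ∈ T, ℓ ≤ f i) =
      (piAntidiag (univ : Finset (Fin m)) n).filter
        (fun f => ∀ i, (2 + if i ∈ T then (ℓ - 2) else 0) ≤ f i) := by
    unfold comps
    rw [filter_filter]
    apply filter_congr
    intro f _
    constructor
    · rintro ⟨h1, h2⟩ i
      split_ifs with hi
      · have := h2 i hi; omega
      · have := h1 i; omega
    · intro h1
      refine ⟨fun i => ?_, fun i hi => ?_⟩
      · have := h1 i; omega
      · have := h1 i; rw [if_pos hi] at this; omega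
  by_cases hkn : k ≤ n - 2 * m
  · rw [heq, card_lower _ _ _ (by rw [hsum]; omega), hsum, card_comps m n h hm, Nat.multichoose_eq]
    have := Nat.choose_mul (n := n - m - 1) hkn
    rw [Nat.descFactorial_eq_factorial_mul_choose, Nat.descFactorial_eq_factorial_mul_choose]
    have e1 : m + (n - (2 * m + k)) - 1 = n - m - 1 - k := by omega
    have e2 : n - (2 * m + k) = n - 2 * m - k := by omega
    rw [e1, e2]
    calc _ = k.factorial * ((n - m - 1).choose k * (n - m - 1 - k).choose (n - 2 * m - k)) := by ring
      _ = _ := by rw [← this]; ring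
  · rw [Nat.descFactorial_of_lt (n := n - 2 * m) (by omega)]
    have : (comps m n).filter (fun f => ∀ i ∈ T, ℓ ≤ f i) = ∅ := by
      rw [heq, filter_eq_empty_iff]
      intro f hf h1
      simp only [mem_piAntidiag] at hf
      have := sum_le_sum (s := univ) (fun i _ => h1 i)
      have hf1 : ∑ i, f i = n := hf.1
      omega
    rw [this]; simp

open Finset in
lemma card_comps_Q (m n t ℓ : ℕ) (hℓ : 2 ≤ ℓ) (h : 2 * m ≤ n) (hm : 1 ≤ m) :
    ((comps m n).filter (fun f => t ≤ (univ.filter (fun i => ℓ ≤ f i)).card)).card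
        * (n - m - 1).descFactorial (t * (ℓ - 2))
      ≤ m.choose t * ((comps m n).card * (n - 2 * m).descFactorial (t * (ℓ - 2))) := by
  have hsub : (comps m n).filter (fun f => t ≤ (univ.filter (fun i => ℓ ≤ f i)).card) ⊆
      (powersetCard t (univ : Finset (Fin m))).biUnion
        (fun T => (comps m n).filter (fun f => ∀ i ∈ T, ℓ ≤ f i)) := by
    intro f hf
    rw [mem_filter] at hf
    obtain ⟨T, hT, hc⟩ := exists_subset_card_eq hf.2
    rw [mem_biUnion]
    refine ⟨T, by simp [hc], ?_⟩
    rw [mem_filter]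
    exact ⟨hf.1, fun i hi => (mem_filter.1 (hT hi)).2⟩
  calc _ ≤ (∑ T ∈ powersetCard t (univ : Finset (Fin m)),
          ((comps m n).filter (fun f => ∀ i ∈ T, ℓ ≤ f i)).card) *
            (n - m - 1).descFactorial (t * (ℓ - 2)) :=
        Nat.mul_le_mul_right _ ((card_le_card hsub).trans card_biUnion_le)
    _ = ∑ T ∈ powersetCard t (univ : Finset (Fin m)),
          (comps m n).card * (n - 2 * m).descFactorial (t * (ℓ - 2)) := by
        rw [sum_mul]
        apply sum_congr rfl
        intro T hT
        have := card_comps_T m n ℓ hℓ h hm T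
        rw [(mem_powersetCard.1 hT).2] at this
        exact this
    _ = _ := by simp

lemma final_ineq (n m t ℓ A I c CQ C : ℕ) (ht1 : 1 ≤ t) (htm : t ≤ m - 1)
    (htl : t * (ℓ - 2) ≤ n - m - 1) (hc : 0 < c) (d : ℕ)
    (hA : A * c = CQ * d) (hI : I * c = C * d) (hd : 0 < d) (hC : 0 < C)
    (hQ : CQ * (n - m - 1).descFactorial (t * (ℓ - 2))
      ≤ m.choose t * (C * (n - 2 * m).descFactorial (t * (ℓ - 2)))) :
    (A : ℝ) / (I : ℝ) ≤
      (1 + (t : ℝ) / ((m : ℝ) - t)) * (1 / (t.factorial : ℝ)) *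
        (((m - 1).descFactorial t : ℝ) * ((n - 2 * m).descFactorial (t * (ℓ - 2)) : ℝ)) /
        ((n - m - 1).descFactorial (t * (ℓ - 2)) : ℝ) := by
  have hD : 0 < (n - m - 1).descFactorial (t * (ℓ - 2)) := Nat.descFactorial_pos.2 htl
  have hIpos : 0 < I := by
    rcases Nat.eq_zero_or_pos I with h | h
    · subst h; have : 0 < C * d := Nat.mul_pos hC hd
      omega
    · exact h
  set D := (n - m - 1).descFactorial (t * (ℓ - 2))
  set E := (n - 2 * m).descFactorial (t * (ℓ - 2))
  have hch : (1 + (t : ℝ) / ((m : ℝ) - t)) * (1 / (t.factorial : ℝ)) * ((m - 1).descFactorial t : ℝ)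
      = m.choose t := by
    obtain ⟨m', rfl⟩ : ∃ m', m = m' + 1 := ⟨m - 1, by omega⟩
    have h1 : ((m' + 1 : ℕ) : ℝ) - t ≠ 0 := by
      have : (t : ℝ) < ((m' + 1 : ℕ) : ℝ) := by exact_mod_cast (by omega : t < m' + 1)
      exact ne_of_gt (by linarith)
    have h2 := Nat.succ_descFactorial m' t
    have h3 := Nat.descFactorial_eq_factorial_mul_choose (m' + 1) t
    rw [h3] at h2
    have h4 : (((m' + 1 : ℕ) : ℝ) - t) * (t.factorial * (m' + 1).choose t) = ((m' + 1 : ℕ) : ℝ) * (m'.descFactorial t : ℝ) := by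
      have : (((m' + 1 - t : ℕ)) : ℝ) = ((m' + 1 : ℕ) : ℝ) - t := by
        rw [Nat.cast_sub (by omega)]
      rw [← this]; exact_mod_cast h2
    have h5 : (t.factorial : ℝ) ≠ 0 := by exact_mod_cast t.factorial_ne_zero
    simp only [Nat.add_sub_cancel]
    field_simp
    linear_combination -h4
  have key : A * D ≤ m.choose t * (I * E) := by
    have : (A * D) * c ≤ (m.choose t * (I * E)) * c := by
      calc (A * D) * c = (CQ * D) * d := by linear_combination D * hA
        _ ≤ (m.choose t * (C * E)) * d := Nat.mul_le_mul_right _ hQ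
        _ = _ := by linear_combination (m.choose t * E) * hI.symm
    exact Nat.le_of_mul_le_mul_right this hc
  have key' : (A : ℝ) * D ≤ m.choose t * (I * E) := by exact_mod_cast key
  rw [← mul_assoc, hch, div_le_div_iff₀ (by exact_mod_cast hIpos) (by exact_mod_cast hD)]
  linarith
/-- The graph of a labelling by (component index, position in the path). -/
def labGraph {n m : ℕ} (p : Fin n → Fin m × ℕ) : SimpleGraph (Fin n) where
  Adj u v := (p u).1 = (p v).1 ∧ ((p u).2 + 1 = (p v).2 ∨ (p v).2 + 1 = (p u).2)
  symm := ⟨fun _ _ h => ⟨h.1.symm, h.2.symm⟩⟩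
  loopless := ⟨fun u h => by have := h.2; omega⟩

/-- `p` is a labelling with component sizes `f`. -/
structure IsLab {n m : ℕ} (f : Fin m → ℕ) (p : Fin n → Fin m × ℕ) : Prop where
  inj : Function.Injective p
  range : ∀ i a, (∃ v, p v = (i, a)) ↔ a < f i
  two : ∀ i, 2 ≤ f i

lemma labGraph_adj {n m : ℕ} (p : Fin n → Fin m × ℕ) (u v : Fin n) :
    (labGraph p).Adj u v ↔ (p u).1 = (p v).1 ∧ ((p u).2 + 1 = (p v).2 ∨ (p v).2 + 1 = (p u).2) :=
  Iff.rfl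

namespace IsLab
variable {n m : ℕ} {f : Fin m → ℕ} {p : Fin n → Fin m × ℕ}

lemma lt (h : IsLab f p) (v : Fin n) : (p v).2 < f (p v).1 :=
  (h.range _ _).1 ⟨v, rfl⟩

lemma reach_zero (h : IsLab f p) (i : Fin m) (w : Fin n) (hw : p w = (i, 0)) :
    ∀ (a : ℕ) (v : Fin n), p v = (i, a) → (labGraph p).Reachable v w := by
  intro a
  induction a with
  | zero =>
    intro v hv
    rw [h.inj (hv.trans hw.symm)]
  | succ a ih =>
    intro v hv
    have h1 : a + 1 < f i := (h.range _ _).1 ⟨v, hv⟩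
    obtain ⟨u, hu⟩ := (h.range i a).2 (by omega)
    refine SimpleGraph.Reachable.trans (SimpleGraph.Adj.reachable ?_) (ih u hu)
    rw [labGraph_adj, hu, hv]
    simp

lemma reachable_iff (h : IsLab f p) (u v : Fin n) :
    (labGraph p).Reachable u v ↔ (p u).1 = (p v).1 := by
  constructor
  · rintro ⟨w⟩
    induction w with
    | nil => rfl
    | cons hadj _ ih => exact hadj.1.trans ih
  · intro huv
    obtain ⟨w, hw⟩ := (h.range (p u).1 0).2 (by have := h.two (p u).1; omega)
    have h1 := h.reach_zero _ w hw (p u).2 u rfl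
    have h2 := h.reach_zero _ w hw (p v).2 v (by rw [huv])
    exact h1.trans h2.symm

/-- the vertex with a given label -/
noncomputable def vert (h : IsLab f p) (i : Fin m) (a : ℕ) (ha : a < f i) : Fin n :=
  ((h.range i a).2 ha).choose

lemma p_vert (h : IsLab f p) (i : Fin m) (a : ℕ) (ha : a < f i) : p (h.vert i a ha) = (i, a) :=
  ((h.range i a).2 ha).choose_spec

/-- components correspond to indices -/
noncomputable def compEquiv (h : IsLab f p) : (labGraph p).ConnectedComponent ≃ Fin m :=
  Equiv.ofBijective
    (fun c => c.lift (fun v => (p v).1) (fun u v w _ => (h.reachable_iff u v).1 ⟨w⟩)) (by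
      constructor
      · intro c d
        induction c using SimpleGraph.ConnectedComponent.ind with | _ u
        induction d using SimpleGraph.ConnectedComponent.ind with | _ v
        intro huv
        exact SimpleGraph.ConnectedComponent.eq.2 ((h.reachable_iff u v).2 huv)
      · intro i
        refine ⟨(labGraph p).connectedComponentMk
          (h.vert i 0 (by have := h.two i; omega)), ?_⟩
        simp [h.p_vert])

lemma compEquiv_mk (h : IsLab f p) (v : Fin n) :
    h.compEquiv ((labGraph p).connectedComponentMk v) = (p v).1 := rfl

lemma mem_supp (h : IsLab f p) (c : (labGraph p).ConnectedComponent) (v : Fin n) :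
    v ∈ c.supp ↔ (p v).1 = h.compEquiv c := by
  rw [SimpleGraph.ConnectedComponent.mem_supp_iff, ← h.compEquiv_mk, h.compEquiv.apply_eq_iff_eq]

lemma range_vert (h : IsLab f p) (c : (labGraph p).ConnectedComponent) :
    Set.range (fun a : Fin (f (h.compEquiv c)) => h.vert _ a.1 a.2) = c.supp := by
  ext v
  rw [h.mem_supp]
  constructor
  · rintro ⟨a, rfl⟩
    simp [h.p_vert]
  · intro hv
    refine ⟨⟨(p v).2, by rw [← hv]; exact h.lt v⟩, ?_⟩
    apply h.inj
    rw [h.p_vert]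
    exact Prod.ext hv.symm rfl

lemma vert_inj (h : IsLab f p) (i : Fin m) :
    Function.Injective (fun a : Fin (f i) => h.vert i a.1 a.2) := by
  intro a b hab
  have := congrArg p hab
  simp only [h.p_vert, Prod.mk.injEq, true_and] at this
  exact Fin.ext this

lemma pathsGraph (h : IsLab f p) : PathsGraph (labGraph p) m := by
  refine ⟨by rw [Nat.card_congr h.compEquiv, Nat.card_fin], fun c => ?_⟩
  refine ⟨f (h.compEquiv c), fun a => h.vert _ a.1 a.2, h.two _, h.vert_inj _, h.range_vert c, ?_⟩
  intro a b
  simp [labGraph_adj, h.p_vert]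

lemma ncard_supp (h : IsLab f p) (c : (labGraph p).ConnectedComponent) :
    c.supp.ncard = f (h.compEquiv c) := by
  rw [← h.range_vert c, ← Set.image_univ, Set.ncard_image_of_injective _ (h.vert_inj _),
    Set.ncard_univ, Nat.card_fin]

lemma card_large (h : IsLab f p) (ℓ : ℕ) :
    Nat.card {c : (labGraph p).ConnectedComponent // ℓ ≤ c.supp.ncard}
      = (Finset.univ.filter (fun i => ℓ ≤ f i)).card := by
  rw [← Fintype.card_subtype, ← Nat.card_eq_fintype_card]
  refine Nat.card_congr (h.compEquiv.subtypeEquiv (fun c => ?_))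
  rw [h.ncard_supp]

end IsLab

lemma exists_lab {n m : ℕ} (G : SimpleGraph (Fin n)) (hG : PathsGraph G m) :
    ∃ (f : Fin m → ℕ) (p : Fin n → Fin m × ℕ), IsLab f p ∧ labGraph p = G := by
  obtain ⟨hc, hp⟩ := hG
  choose L v hL hinj hrange hadj using hp
  have e : G.ConnectedComponent ≃ Fin m := Finite.equivFinOfCardEq hc
  have hidx : ∀ u : Fin n, ∃ a, v (G.connectedComponentMk u) a = u := by
    intro u
    have : u ∈ Set.range (v (G.connectedComponentMk u)) := by
      rw [hrange]; rfl
    exact this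
  choose idx hidx using hidx
  have hmk : ∀ c a, G.connectedComponentMk (v c a) = c := by
    intro c a
    have : v c a ∈ c.supp := by rw [← hrange]; exact ⟨a, rfl⟩
    exact this
  have hv : ∀ c (a : Fin (L c)), ((idx (v c a) : ℕ)) = a := by
    intro c a
    have h1 := hidx (v c a)
    have : ∀ c' (b : Fin (L c')), c' = c → v c' b = v c a → (b : ℕ) = a := by
      rintro c' b rfl hb
      rw [hinj _ hb]
    exact this _ _ (hmk c a) h1
  have hex : ∀ u, ∃ c a, v c a = u := fun u => ⟨_, _, hidx u⟩
  refine ⟨fun i => L (e.symm i), fun u => (e (G.connectedComponentMk u), idx u), ⟨?_, ?_, ?_⟩, ?_⟩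
  · intro u w huw
    obtain ⟨c, a, rfl⟩ := hex u
    obtain ⟨d, b, rfl⟩ := hex w
    simp only [hmk, hv, Prod.mk.injEq, e.apply_eq_iff_eq] at huw
    obtain ⟨rfl, hab⟩ := huw
    rw [Fin.ext hab]
  · intro i a
    constructor
    · rintro ⟨u, hu⟩
      obtain ⟨c, b, rfl⟩ := hex u
      simp only [hmk, hv, Prod.mk.injEq] at hu
      obtain ⟨rfl, rfl⟩ := hu
      simp
    · intro ha
      refine ⟨v (e.symm i) ⟨a, ha⟩, ?_⟩
      simp [hmk, hv]
  · intro i; exact hL _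
  · ext u w
    obtain ⟨c, a, rfl⟩ := hex u
    obtain ⟨d, b, rfl⟩ := hex w
    simp only [labGraph_adj, hmk, hv, e.apply_eq_iff_eq]
    constructor
    · rintro ⟨rfl, h⟩
      exact (hadj _ _ _).2 h
    · intro h
      have : c = d := by
        rw [← hmk c a, ← hmk d b]
        exact SimpleGraph.ConnectedComponent.eq.2 h.reachable
      subst this
      exact ⟨rfl, (hadj _ _ _).1 h⟩

lemma seq_lemma (F : ℕ) (s : ℕ → ℕ) (hF : 2 ≤ F)
    (inj : ∀ a b, a < F → b < F → s a = s b → a = b)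
    (adj : ∀ a, a + 1 < F → s a + 1 = s (a + 1) ∨ s (a + 1) + 1 = s a)
    (zero : ∃ a, a < F ∧ s a = 0) :
    (∀ a, a < F → s a = a) ∨ (∀ a, a < F → s a = F - 1 - a) := by
  obtain ⟨z, hz, hz0⟩ := zero
  rcases adj 0 (by omega) with h0 | h0
  · left
    have key : ∀ a, a + 1 < F → s a = s 0 + a ∧ s (a + 1) = s 0 + a + 1 := by
      intro a
      induction a with
      | zero => intro _; exact ⟨rfl, by omega⟩
      | succ a ih =>
        intro ha
        have h1 := ih (by omega)
        have h2 := adj (a + 1) ha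
        refine ⟨by omega, ?_⟩
        rcases h2 with h2 | h2
        · omega
        · have := inj a (a + 1 + 1) (by omega) ha (by omega)
          omega
    have key2 : ∀ a, a < F → s a = s 0 + a := by
      intro a ha
      rcases a with _ | a
      · rfl
      · have := key a ha; omega
    intro a ha
    have := key2 a ha
    have := key2 z hz
    omega
  · right
    have key : ∀ a, a + 1 < F → s a + a = s 0 ∧ s (a + 1) + a + 1 = s 0 := by
      intro a
      induction a with
      | zero => intro _; exact ⟨rfl, by omega⟩
      | succ a ih =>
        intro ha
        have h1 := ih (by omega)
        have h2 := adj (a + 1) ha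
        refine ⟨by omega, ?_⟩
        rcases h2 with h2 | h2
        · have := inj a (a + 1 + 1) (by omega) ha (by omega)
          omega
        · omega
    have key2 : ∀ a, a < F → s a + a = s 0 := by
      intro a ha
      rcases a with _ | a
      · rfl
      · have := key a ha; omega
    have hzF : z = F - 1 := by
      by_contra hne
      have := key2 (z + 1) (by omega)
      have := key2 z hz
      omega
    intro a ha
    have := key2 a ha
    have := key2 z hz
    omega

namespace IsLab
variable {n m : ℕ} {f : Fin m → ℕ} {p : Fin n → Fin m × ℕ}

lemma f_unique {g : Fin m → ℕ} (h : IsLab f p) (h' : IsLab g p) : f = g := by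
  funext i
  have : ∀ a, a < f i ↔ a < g i := fun a => (h.range i a).symm.trans (h'.range i a)
  exact le_antisymm (not_lt.1 fun hh => by have := (this (g i)).1 hh; omega)
    (not_lt.1 fun hh => by have := (this (f i)).2 hh; omega)

/-- relabelling: permute the components and reverse some of them -/
def twist (f : Fin m → ℕ) (p : Fin n → Fin m × ℕ) (π : Equiv.Perm (Fin m)) (b : Fin m → Bool) :
    Fin n → Fin m × ℕ :=
  fun v => (π (p v).1, if b (p v).1 then (p v).2 else f (p v).1 - 1 - (p v).2)

lemma twist_isLab (h : IsLab f p) (π : Equiv.Perm (Fin m)) (b : Fin m → Bool) :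
    IsLab (fun i => f (π.symm i)) (twist f p π b) := by
  refine ⟨?_, ?_, fun i => h.two _⟩
  · intro u v huv
    simp only [twist, Prod.mk.injEq, π.apply_eq_iff_eq] at huv
    obtain ⟨h1, h2⟩ := huv
    have hu := h.lt u
    have hv := h.lt v
    rw [h1] at h2 hu
    apply h.inj
    refine Prod.ext h1 ?_
    split_ifs at h2 <;> omega
  · intro i a
    constructor
    · rintro ⟨v, hv⟩
      simp only [twist, Prod.mk.injEq] at hv
      obtain ⟨rfl, rfl⟩ := hv
      have hv := h.lt v
      simp only [Equiv.symm_apply_apply]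
      split_ifs <;> omega
    · intro ha
      by_cases hb : b (π.symm i) = true
      · refine ⟨h.vert (π.symm i) a ha, ?_⟩
        simp [twist, h.p_vert, hb]
      · refine ⟨h.vert (π.symm i) (f (π.symm i) - 1 - a) (by omega), ?_⟩
        simp [twist, h.p_vert, hb]
        omega

lemma twist_graph (h : IsLab f p) (π : Equiv.Perm (Fin m)) (b : Fin m → Bool) :
    labGraph (twist f p π b) = labGraph p := by
  ext u v
  simp only [labGraph_adj, twist, π.apply_eq_iff_eq]
  apply and_congr_right
  intro h1
  have hu := h.lt u
  have hv := h.lt v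
  rw [h1] at hu ⊢
  split_ifs <;> omega

lemma twist_inj (h : IsLab f p) {π π' : Equiv.Perm (Fin m)} {b b' : Fin m → Bool}
    (heq : twist f p π b = twist f p π' b') : π = π' ∧ b = b' := by
  have key : ∀ i, π i = π' i ∧ b i = b' i := by
    intro i
    have h2 := h.two i
    have := congrFun heq (h.vert i 0 (by omega))
    simp only [twist, h.p_vert, Prod.mk.injEq] at this
    refine ⟨this.1, ?_⟩
    have h3 := this.2
    rcases hb : b i <;> rcases hb' : b' i <;> simp [hb, hb'] at h3 ⊢ <;> omega
  exact ⟨Equiv.ext fun i => (key i).1, funext fun i => (key i).2⟩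

lemma exists_twist (h : IsLab f p) {g : Fin m → ℕ} {q : Fin n → Fin m × ℕ} (h' : IsLab g q)
    (heq : labGraph q = labGraph p) : ∃ π b, twist f p π b = q := by
  have hpos : ∀ i, 0 < f i := fun i => by have := h.two i; omega
  have hfst : ∀ u v, (q u).1 = (q v).1 ↔ (p u).1 = (p v).1 := by
    intro u v
    rw [← h.reachable_iff, ← h'.reachable_iff, heq]
  let π0 : Fin m → Fin m := fun i => (q (h.vert i 0 (hpos i))).1
  have hπ0 : ∀ v, π0 (p v).1 = (q v).1 := by
    intro v
    exact (hfst _ _).2 (by rw [h.p_vert])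
  have hinj : Function.Injective π0 := by
    intro i j hij
    have := (hfst _ _).1 hij
    simpa [h.p_vert] using this
  let π : Equiv.Perm (Fin m) := Equiv.ofBijective π0 (Finite.injective_iff_bijective.1 hinj)
  have hs : ∀ i, ∃ b : Bool, ∀ a (ha : a < f i),
      (q (h.vert i a ha)).2 = if b then a else f i - 1 - a := by
    intro i
    have hq1 : ∀ a (ha : a < f i), (q (h.vert i a ha)).1 = π0 i := by
      intro a ha
      rw [← hπ0, h.p_vert]
    have := seq_lemma (f i) (fun a => if ha : a < f i then (q (h.vert i a ha)).2 else 0) (h.two i)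
      (by
        intro a b ha hb hab
        simp only [ha, hb, dif_pos] at hab
        have : h.vert i a ha = h.vert i b hb :=
          h'.inj (Prod.ext ((hq1 a ha).trans (hq1 b hb).symm) hab)
        have := congrArg p this
        simpa [h.p_vert] using this)
      (by
        intro a ha
        have ha' : a < f i := by omega
        simp only [ha, ha', dif_pos]
        have : (labGraph q).Adj (h.vert i a ha') (h.vert i (a + 1) ha) := by
          rw [heq, labGraph_adj, h.p_vert, h.p_vert]
          simp
        exact this.2)
      (by
        obtain ⟨w, hw⟩ := (h'.range (π0 i) 0).2 (by have := h'.two (π0 i); omega)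
        have hwi : (p w).1 = i := by
          apply hinj
          rw [hπ0, hw]
        have hlt : (p w).2 < f i := by rw [← hwi]; exact h.lt w
        have hww : h.vert i (p w).2 hlt = w := by
          apply h.inj
          rw [h.p_vert]
          exact Prod.ext hwi.symm rfl
        refine ⟨(p w).2, hlt, ?_⟩
        simp only [hlt, dif_pos, hww, hw])
    rcases this with h1 | h1
    · refine ⟨true, fun a ha => ?_⟩
      have := h1 a ha
      simpa [ha] using this
    · refine ⟨false, fun a ha => ?_⟩
      have := h1 a ha
      simpa [ha] using this
  choose b hb using hs
  refine ⟨π, b, ?_⟩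
  funext v
  have hv : h.vert (p v).1 (p v).2 (h.lt v) = v := h.inj (h.p_vert _ _ _)
  refine Prod.ext (hπ0 v) ?_
  have := hb (p v).1 (p v).2 (h.lt v)
  rw [hv] at this
  exact this.symm

lemma card_fiber (h : IsLab f p) :
    Nat.card {x : (Fin m → ℕ) × (Fin n → Fin m × ℕ) //
      IsLab x.1 x.2 ∧ labGraph x.2 = labGraph p} = m.factorial * 2 ^ m := by
  have : Nat.card (Equiv.Perm (Fin m) × (Fin m → Bool)) = m.factorial * 2 ^ m := by
    rw [Nat.card_eq_fintype_card]
    simp [Fintype.card_perm]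
  rw [← this]
  symm
  refine Nat.card_congr (Equiv.ofBijective (fun x => ⟨(fun i => f (x.1.symm i), twist f p x.1 x.2),
    h.twist_isLab _ _, h.twist_graph _ _⟩) ⟨?_, ?_⟩)
  · rintro ⟨π, b⟩ ⟨π', b'⟩ hxy
    simp only [Subtype.mk.injEq, Prod.mk.injEq] at hxy
    obtain ⟨rfl, rfl⟩ := h.twist_inj hxy.2
    rfl
  · rintro ⟨⟨g, q⟩, h', heq⟩
    obtain ⟨π, b, rfl⟩ := h.exists_twist h' heq
    refine ⟨(π, b), ?_⟩
    apply Subtype.ext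
    exact Prod.ext ((h.twist_isLab π b).f_unique h') rfl

lemma sum_eq (h : IsLab f p) : ∑ i, f i = n := by
  have e : Fin n ≃ (Σ i : Fin m, Fin (f i)) :=
    Equiv.ofBijective (fun v => ⟨(p v).1, ⟨(p v).2, h.lt v⟩⟩) ⟨by
      intro u v huv
      apply h.inj
      simp only [Sigma.mk.injEq] at huv
      refine Prod.ext huv.1 ?_
      have h2 := huv.2
      rw [Fin.heq_ext_iff (by rw [huv.1])] at h2
      exact h2, by
      rintro ⟨i, a, ha⟩
      refine ⟨h.vert i a ha, ?_⟩
      have := h.p_vert i a ha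
      ext
      · simp [this]
      · simp only
        rw [Fin.heq_ext_iff (by rw [this])]
        simp [this]⟩
  have := Fintype.card_congr e
  simp at this
  exact this.symm

end IsLab

lemma card_lab {n m : ℕ} (f : Fin m → ℕ) (hf : ∀ i, 2 ≤ f i) (hs : ∑ i, f i = n) :
    Nat.card {p : Fin n → Fin m × ℕ // IsLab f p} = n.factorial := by
  have e : {p : Fin n → Fin m × ℕ // IsLab f p} ≃ (Fin n ≃ (Σ i : Fin m, Fin (f i))) := by
    refine Equiv.symm (Equiv.ofBijective (fun e => ⟨fun v => ((e v).1, ((e v).2 : ℕ)), ?_⟩) ⟨?_, ?_⟩)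
    · refine ⟨?_, ?_, hf⟩
      · intro u v huv
        simp only [Prod.mk.injEq] at huv
        apply e.injective
        ext
        · rw [huv.1]
        · rw [Fin.heq_ext_iff (by rw [huv.1])]
          exact huv.2
      · intro i a
        constructor
        · rintro ⟨v, hv⟩
          simp only [Prod.mk.injEq] at hv
          obtain ⟨rfl, rfl⟩ := hv
          exact (e v).2.2
        · intro ha
          exact ⟨e.symm ⟨i, ⟨a, ha⟩⟩, by rw [e.apply_symm_apply]⟩
    · intro e e' hee
      ext v
      · have := congrFun (Subtype.ext_iff.1 hee) v
        simp only [Prod.mk.injEq] at this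
        rw [this.1]
      · have := congrFun (Subtype.ext_iff.1 hee) v
        simp only [Prod.mk.injEq] at this
        rw [Fin.heq_ext_iff (by rw [this.1])]
        exact this.2
    · rintro ⟨p, h⟩
      refine ⟨Equiv.ofBijective (fun v => ⟨(p v).1, ⟨(p v).2, h.lt v⟩⟩) ⟨?_, ?_⟩, ?_⟩
      · intro u v huv
        apply h.inj
        simp only [Sigma.mk.injEq] at huv
        refine Prod.ext huv.1 ?_
        have h2 := huv.2
        rw [Fin.heq_ext_iff (by rw [huv.1])] at h2
        exact h2
      · rintro ⟨i, a, ha⟩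
        refine ⟨h.vert i a ha, ?_⟩
        have := h.p_vert i a ha
        ext
        · simp [this]
        · simp only
          rw [Fin.heq_ext_iff (by rw [this])]
          simp [this]
      · rfl
  rw [Nat.card_congr e, Nat.card_eq_fintype_card, Fintype.card_equiv (finCongr hs.symm |>.trans finSigmaFinEquiv.symm)]
  simp

lemma double_count (n m : ℕ) (Q : (Fin m → ℕ) → Prop) [DecidablePred Q] (R : SimpleGraph (Fin n) → Prop)
    (hQR : ∀ f p, IsLab (n := n) f p → (Q f ↔ R (labGraph p))) :
    Nat.card {G : SimpleGraph (Fin n) // PathsGraph G m ∧ R G} * (m.factorial * 2 ^ m)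
      = ((comps m n).filter Q).card * n.factorial := by
  let X := {x : (Fin m → ℕ) × (Fin n → Fin m × ℕ) // IsLab x.1 x.2 ∧ Q x.1}
  let gr : X → {G : SimpleGraph (Fin n) // PathsGraph G m ∧ R G} := fun x =>
    ⟨labGraph x.1.2, x.2.1.pathsGraph, (hQR _ _ x.2.1).1 x.2.2⟩
  let cp : X → {f // f ∈ (comps m n).filter Q} := fun x =>
    ⟨x.1.1, by
      simp only [comps, Finset.mem_filter, Finset.mem_piAntidiag, Finset.mem_univ, implies_true,
        and_true]
      exact ⟨⟨x.2.1.sum_eq, x.2.1.two⟩, x.2.2⟩⟩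
  have h1 : ∀ G, Nat.card {x : X // gr x = G} = m.factorial * 2 ^ m := by
    rintro ⟨G, hG, hR⟩
    obtain ⟨f, p, h, rfl⟩ := exists_lab G hG
    rw [← h.card_fiber]
    refine Nat.card_congr ⟨fun x => ⟨x.1.1, x.1.2.1, Subtype.ext_iff.1 x.2⟩,
      fun x => ⟨⟨x.1, x.2.1, (hQR _ _ x.2.1).2 (by rw [x.2.2]; exact hR)⟩, Subtype.ext x.2.2⟩,
      fun x => rfl, fun x => rfl⟩
  have h2 : ∀ f, Nat.card {x : X // cp x = f} = n.factorial := by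
    rintro ⟨f, hf⟩
    have hf' := hf
    simp only [comps, Finset.mem_filter, Finset.mem_piAntidiag, Finset.mem_univ, implies_true,
      and_true] at hf'
    rw [← card_lab f hf'.1.2 hf'.1.1]
    refine Nat.card_congr ⟨fun x => ⟨x.1.1.2, by
        have := Subtype.ext_iff.1 x.2
        have h3 := x.1.2.1
        change x.1.1.1 = f at this
        rw [this] at h3
        exact h3⟩,
      fun x => ⟨⟨(f, x.1), x.2, hf'.2⟩, rfl⟩, ?_, fun x => rfl⟩
    rintro ⟨⟨⟨g, q⟩, hx⟩, hy⟩
    have : g = f := Subtype.ext_iff.1 hy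
    subst this
    rfl
  have hfin1 : ∀ G, Finite {x : X // gr x = G} := fun G =>
    Nat.finite_of_card_ne_zero (by rw [h1]; positivity)
  have hfin2 : ∀ f, Finite {x : X // cp x = f} := fun f =>
    Nat.finite_of_card_ne_zero (by rw [h2]; positivity)
  classical
  have : Fintype {G : SimpleGraph (Fin n) // PathsGraph G m ∧ R G} := Fintype.ofFinite _
  have e1 := Nat.card_congr (Equiv.sigmaFiberEquiv gr)
  have e2 := Nat.card_congr (Equiv.sigmaFiberEquiv cp)
  rw [Nat.card_sigma] at e1 e2
  simp only [h1, h2, Finset.sum_const, Finset.card_univ, smul_eq_mul] at e1 e2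
  rw [Nat.card_eq_fintype_card, e1, ← e2]
  simp

/-- For `S` uniform in `I_{0,m}`, the probability that at least `t` components of `S`
have at least `ℓ` vertices is at most
`(1 + t/(m−t)) · (1/t!) · (m−1)_t · (n−2m)_{t(ℓ−2)} / (n−m−1)_{t(ℓ−2)}`. -/
theorem stmt10 (n m t ℓ : ℕ) (ht1 : 1 ≤ t) (htm : t ≤ m - 1) (hℓ : 2 ≤ ℓ)
    (hmn : 2 * m ≤ n) (htl : t * (ℓ - 2) ≤ n - m - 1) :
    (Nat.card {G : SimpleGraph (Fin n) // PathsGraph G m ∧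
        t ≤ Nat.card {c : G.ConnectedComponent // ℓ ≤ c.supp.ncard}} : ℝ) /
      (Nat.card {G : SimpleGraph (Fin n) // PathsGraph G m} : ℝ) ≤
      (1 + (t : ℝ) / ((m : ℝ) - t)) * (1 / (t.factorial : ℝ)) *
        (((m - 1).descFactorial t : ℝ) * ((n - 2 * m).descFactorial (t * (ℓ - 2)) : ℝ)) /
        ((n - m - 1).descFactorial (t * (ℓ - 2)) : ℝ) := by
  have hm : 1 ≤ m := by omega
  have hA := double_count n m (fun f => t ≤ (Finset.univ.filter (fun i => ℓ ≤ f i)).card)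
    (fun G => t ≤ Nat.card {c : G.ConnectedComponent // ℓ ≤ c.supp.ncard})
    (fun f p h => by rw [h.card_large])
  have hI := double_count n m (fun _ => True) (fun _ => True) (fun _ _ _ => Iff.rfl)
  simp only [and_true, Finset.filter_true] at hI
  refine final_ineq n m t ℓ _ _ _ _ _ ht1 htm htl (by positivity) _ hA hI
    (Nat.factorial_pos n) ?_ (card_comps_Q m n t ℓ hℓ hmn hm)
  rw [card_comps m n hmn hm]
  exact Nat.choose_pos (by omega)
end
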